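/- arXiv:1504.06522 — 2 statements merged into one kernel-verified Lean document; each statement's English description precedes it below -/
import Mathlib

section
/- Let n >= 3 and i = 3. Then for every integer m >= 2, S(D, m*omega_3) = S(D, (m-2)*omega_3) + S(D, 2*omega_3). -/
open scoped Pointwise

/-- A single step in a Dyck path: `α_{p,q} → α_{p,q+1}` or `α_{p,q} → α_{p+1,q}`. -/
def RootStep (a b : ℕ × ℕ) : Prop :=
  (b.1 = a.1 ∧ b.2 = a.2 + 1) ∨ (b.1 = a.1 + 1 ∧ b.2 = a.2)

/-- `inR n i (p,q)` means that `α_{p,q}` is a positive root of `B_n`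
(`1 ≤ p ≤ n`, `p ≤ q ≤ 2n-p`) belonging to `R_i^+`, i.e. `p ≤ i ≤ q`. -/
def inR (n i : ℕ) (a : ℕ × ℕ) : Prop :=
  1 ≤ a.1 ∧ a.1 ≤ i ∧ i ≤ a.2 ∧ a.1 + a.2 ≤ 2 * n

/-- A type 1 Dyck path for `R_i^+` of `B_n`, recorded as the list of its roots. -/
def IsType1 (n i : ℕ) (L : List (ℕ × ℕ)) : Prop :=
  L ≠ [] ∧ L.Chain' RootStep ∧ (∀ x ∈ L, inR n i x) ∧
    ((L.head? = some (1, i) ∧ L.getLast? = some (i, 2 * n - i - 1)) ∨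
     (L.head? = some (1, i + 1) ∧ L.getLast? = some (i, 2 * n - i)))

/-- A type 2 (double) Dyck path for `R_i^+` of `B_n`, recorded as the pair of lists of
roots of its two constituent single paths. -/
def IsType2 (n i : ℕ) (L1 L2 : List (ℕ × ℕ)) : Prop :=
  ∃ j : ℕ, 1 ≤ j ∧ j < i ∧
    L1 ≠ [] ∧ L2 ≠ [] ∧ L1.Chain' RootStep ∧ L2.Chain' RootStep ∧
    (∀ x ∈ L1, inR n i x) ∧ (∀ x ∈ L2, inR n i x) ∧
    L1.head? = some (1, i) ∧ L2.head? = some (2, i) ∧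
    L1.getLast? = some (j, 2 * n - j) ∧ L2.getLast? = some (j + 1, 2 * n - j - 1) ∧
    (∀ x, ¬(x ∈ L1 ∧ x ∈ L2))

/-- The constant `c_i`: `1` if `i = 1` or `i = n`, and `2` if `2 ≤ i ≤ n-1`. -/
def cB (n i : ℕ) : ℕ := if i = 1 ∨ i = n then 1 else 2

/-- `SD n i m` is the set `S(D, m·ω_i)` of lattice points of the Dyck-path polytope:
multi-exponents `s` supported on `R_i^+` with `∑_{β ∈ p} s_β ≤ m` for every type 1
Dyck path `p` and `∑_{β ∈ p} s_β ≤ m·c_i` for every type 2 Dyck path `p`.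
(Elements of a Dyck path are pairwise distinct, so summation over the recording
lists agrees with summation over the underlying set of roots.) -/
def SD (n i m : ℕ) : Set ((ℕ × ℕ) → ℕ) :=
  {s | (∀ β, ¬ inR n i β → s β = 0) ∧
       (∀ L, IsType1 n i L → (L.map s).sum ≤ m) ∧
       (∀ L1 L2, IsType2 n i L1 L2 → ((L1 ++ L2).map s).sum ≤ m * cB n i)}

/-- The Dyck path inequalities for `i = 3` and `k = 2n - 6`, in terms of the partial sums `X`, `Y`,
`Z` of the three rows of a multi-exponent. -/
structure RowSystem (k : ℕ) (m : ℤ) (X Y Z : ℕ → ℤ) : Prop where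
  x_zero : X 0 = 0
  y_zero : Y 0 = 0
  z_zero : Z 0 = 0
  x_mono : Monotone X
  y_mono : Monotone Y
  z_mono : Monotone Z
  short : ∀ a b, a ≤ b → b < k → X (a + 1) + Y (b + 1) - Y a + Z k - Z b ≤ m
  long : ∀ a b, 1 ≤ a → a ≤ b → b ≤ k →
    X (a + 1) - X 1 + Y (b + 1) - Y a + Z (k + 1) - Z b ≤ m
  double : ∀ a b, b < a → a ≤ k + 1 → b ≤ k →
    X (a + 1) + Y (k + 2) - Y a + Y (b + 1) + Z (k + 1) - Z b ≤ 2 * m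
  top : X (k + 3) + Y (k + 2) ≤ 2 * m

/-- The partial sums `X`, `Y`, `Z` split into a solution at level `l` and one at level `m`. -/
def RowSplit (k : ℕ) (l m : ℤ) (X Y Z : ℕ → ℤ) : Prop :=
  ∃ U V W : ℕ → ℤ, RowSystem k l U V W ∧ RowSystem k m (X - U) (Y - V) (Z - W)

/-- The partial sums of a row with a single unit entry in position `i`. -/
def unitRow (i t : ℕ) : ℤ := if i < t then 1 else 0

section Rows

variable {k : ℕ} {m : ℤ} {X Y Z : ℕ → ℤ}

theorem RowSystem.split_of (h : RowSystem k m X Y Z) (U V W : ℕ → ℤ)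
    (hU0 : U 0 = 0) (hV0 : V 0 = 0) (hW0 : W 0 = 0)
    (hU : ∀ t, X t ≤ X (t + 1) → U t ≤ U (t + 1) ∧ X t - U t ≤ X (t + 1) - U (t + 1))
    (hV : ∀ t, Y t ≤ Y (t + 1) → V t ≤ V (t + 1) ∧ Y t - V t ≤ Y (t + 1) - V (t + 1))
    (hW : ∀ t, Z t ≤ Z (t + 1) → W t ≤ W (t + 1) ∧ Z t - W t ≤ Z (t + 1) - W (t + 1))
    (hs : ∀ a b, a ≤ b → b < k → X (a + 1) + Y (b + 1) - Y a + Z k - Z b ≤ m →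
      U (a + 1) + V (b + 1) - V a + W k - W b ≤ 1 ∧
      X (a + 1) + Y (b + 1) - Y a + Z k - Z b ≤
        m - 1 + (U (a + 1) + V (b + 1) - V a + W k - W b))
    (hl : ∀ a b, 1 ≤ a → a ≤ b → b ≤ k →
      X (a + 1) - X 1 + Y (b + 1) - Y a + Z (k + 1) - Z b ≤ m →
      U (a + 1) - U 1 + V (b + 1) - V a + W (k + 1) - W b ≤ 1 ∧
      X (a + 1) - X 1 + Y (b + 1) - Y a + Z (k + 1) - Z b ≤
        m - 1 + (U (a + 1) - U 1 + V (b + 1) - V a + W (k + 1) - W b))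
    (hd : ∀ a b, b < a → a ≤ k + 1 → b ≤ k →
      X (a + 1) + Y (k + 2) - Y a + Y (b + 1) + Z (k + 1) - Z b ≤ 2 * m →
      U (a + 1) + V (k + 2) - V a + V (b + 1) + W (k + 1) - W b ≤ 2 ∧
      X (a + 1) + Y (k + 2) - Y a + Y (b + 1) + Z (k + 1) - Z b ≤
        2 * m - 2 + (U (a + 1) + V (k + 2) - V a + V (b + 1) + W (k + 1) - W b))
    (ht : U (k + 3) + V (k + 2) = 2) :
    RowSplit k 1 (m - 1) X Y Z := by
  have hx t := hU t (h.x_mono (Nat.le_succ t))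
  have hy t := hV t (h.y_mono (Nat.le_succ t))
  have hz t := hW t (h.z_mono (Nat.le_succ t))
  refine ⟨U, V, W, ⟨hU0, hV0, hW0, monotone_nat_of_le_succ fun t => (hx t).1,
    monotone_nat_of_le_succ fun t => (hy t).1, monotone_nat_of_le_succ fun t => (hz t).1,
    fun a b h1 h2 => (hs a b h1 h2 (h.short a b h1 h2)).1,
    fun a b h1 h2 h3 => (hl a b h1 h2 h3 (h.long a b h1 h2 h3)).1,
    fun a b h1 h2 h3 => (hd a b h1 h2 h3 (h.double a b h1 h2 h3)).1, ht.le⟩,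
    ⟨by simp [h.x_zero, hU0], by simp [h.y_zero, hV0], by simp [h.z_zero, hW0],
    monotone_nat_of_le_succ fun t => (hx t).2, monotone_nat_of_le_succ fun t => (hy t).2,
    monotone_nat_of_le_succ fun t => (hz t).2, ?_, ?_, ?_, ?_⟩⟩
  · intro a b h1 h2
    have := (hs a b h1 h2 (h.short a b h1 h2)).2
    simp only [Pi.sub_apply]
    omega
  · intro a b h1 h2 h3
    have := (hl a b h1 h2 h3 (h.long a b h1 h2 h3)).2
    simp only [Pi.sub_apply]
    omega
  · intro a b h1 h2 h3
    have := (hd a b h1 h2 h3 (h.double a b h1 h2 h3)).2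
    simp only [Pi.sub_apply]
    omega
  · have := h.top
    simp only [Pi.sub_apply]
    omega

theorem unitRow_step (i t : ℕ) : t = i ∧ unitRow i t = 0 ∧ unitRow i (t + 1) = 1 ∨
    t ≠ i ∧ unitRow i (t + 1) = unitRow i t := by
  unfold unitRow
  split_ifs <;> omega

theorem unitRow_part {i : ℕ} (hi : X i < X (i + 1)) (t : ℕ) (ht : X t ≤ X (t + 1)) :
    unitRow i t ≤ unitRow i (t + 1) ∧ X t - unitRow i t ≤ X (t + 1) - unitRow i (t + 1) := by
  rcases unitRow_step i t with ⟨rfl, h0⟩ | h0 <;> omega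

theorem unitRow_add_part {i j : ℕ} (hi : X i < X (i + 1)) (hj : X j < X (j + 1))
    (hij : i = j → X i + 2 ≤ X (i + 1)) (t : ℕ) (ht : X t ≤ X (t + 1)) :
    unitRow i t + unitRow j t ≤ unitRow i (t + 1) + unitRow j (t + 1) ∧
      X t - (unitRow i t + unitRow j t) ≤ X (t + 1) - (unitRow i (t + 1) + unitRow j (t + 1)) := by
  have h1 := unitRow_step i t
  have h2 := unitRow_step j t
  by_cases hi' : t = i
  · subst hi'
    omega
  by_cases hj' : t = j
  · subst hj'
    omega
  omega

theorem RowSystem.split_x_z (h : RowSystem k m X Y Z) (hk : 1 ≤ k)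
    (hT : X (k + 3) + Y (k + 2) = 2 * m) (hx : 0 < X 1) (hz : Z k < Z (k + 1)) :
    RowSplit k 1 (m - 1) X Y Z := by
  have hX0 := h.x_zero
  have hw := h.double (k + 1) k (by omega) le_rfl le_rfl
  simp only [Nat.add_assoc, Nat.reduceAdd] at hw
  refine h.split_of (fun t => unitRow 0 t + unitRow (k + 2) t) (fun _ => 0) (unitRow k)
    (by simp [unitRow]) rfl (by simp [unitRow])
    (unitRow_add_part (show X 0 < X 1 by omega) (show X (k + 2) < X (k + 3) by omega) (by omega))
    (by intros; omega) (unitRow_part hz) ?_ ?_ ?_ ?_ <;>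
    intros <;> unfold unitRow <;> split_ifs <;> omega

theorem RowSystem.split_y_z (h : RowSystem k m X Y Z) (hk : 1 ≤ k)
    (hT : X (k + 3) + Y (k + 2) = 2 * m) (hx : X 1 = 0) (hy : 0 < Y 1) (hz : Z k < Z (k + 1)) :
    RowSplit k 1 (m - 1) X Y Z := by
  have hY0 := h.y_zero
  have hw := h.double (k + 1) k (by omega) le_rfl le_rfl
  simp only [Nat.add_assoc, Nat.reduceAdd] at hw
  refine h.split_of (unitRow (k + 2)) (unitRow 0) (unitRow k)
    (by simp [unitRow]) (by simp [unitRow]) (by simp [unitRow])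
    (unitRow_part (show X (k + 2) < X (k + 3) by omega)) (unitRow_part (show Y 0 < Y 1 by omega))
    (unitRow_part hz) ?_ ?_ ?_ ?_
  · intro a b hab hb hc
    have := h.long a b
    unfold unitRow
    split_ifs <;> omega
  all_goals
    intros
    unfold unitRow
    split_ifs <;> omega

theorem RowSystem.split_z_z (h : RowSystem k m X Y Z) (hk : 1 ≤ k)
    (hT : X (k + 3) + Y (k + 2) = 2 * m) (hx : X 1 = 0) (hy : Y 1 = 0) (hz : Z k < Z (k + 1))
    (hzm : m < Z (k + 1)) :
    RowSplit k 1 (m - 1) X Y Z := by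
  have hY0 := h.y_zero
  have hZ0 := h.z_zero
  have hX2 : X 1 ≤ X 2 := h.x_mono (by omega)
  have hY2 : Y 1 ≤ Y 2 := h.y_mono (by omega)
  have hB b := h.long 1 b
  have hD a := h.double a 0
  simp only [zero_add, Nat.reduceAdd] at hB hD
  have hB1 := hB 1 le_rfl le_rfl hk
  have hBk := hB k le_rfl hk le_rfl
  have hw := hD (k + 1) (by omega) le_rfl (by omega)
  simp only [Nat.add_assoc, Nat.reduceAdd] at hB1 hw
  have hw2 : X (k + 2) + 2 ≤ X (k + 3) := by omega
  refine h.split_of (fun t => unitRow (k + 2) t + unitRow (k + 2) t) (fun _ => 0)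
    (fun t => unitRow 0 t + unitRow k t)
    (by simp [unitRow]) rfl (by simp [unitRow])
    (unitRow_add_part (show X (k + 2) < X (k + 3) by omega) (show X (k + 2) < X (k + 3) by omega)
      fun _ => hw2) (by intros; omega)
    (unitRow_add_part (show Z 0 < Z 1 by omega) hz (by omega)) ?_ ?_ ?_ ?_
  · intro a b hab hb hc
    have := h.long a b
    have := hB b
    unfold unitRow
    obtain rfl | ha := Nat.eq_zero_or_pos a
    · rw [zero_add] at *
      split_ifs <;> omega
    · split_ifs <;> omega
  · intros
    unfold unitRow
    split_ifs <;> omega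
  · intro a b hab ha hb hc
    have := hB b
    have := hD a
    unfold unitRow
    split_ifs <;> omega
  · unfold unitRow
    split_ifs <;> omega

theorem RowSystem.split_y_y (h : RowSystem k m X Y Z) (hk : 1 ≤ k)
    (hx : X 1 = 0) (hz : Z k = Z (k + 1)) (hym : m < Y (k + 1)) :
    RowSplit k 1 (m - 1) X Y Z := by
  have hY0 := h.y_zero
  have hX2 : X 1 ≤ X 2 := h.x_mono (by omega)
  have hB := h.long 1 k le_rfl hk le_rfl
  have hA b := h.short 0 b
  simp only [zero_add, Nat.reduceAdd] at hA hB
  have hA' := hA (k - 1) (by omega) (by omega)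
  have hZ : Z (k - 1) ≤ Z k := h.z_mono (by omega)
  rw [show k - 1 + 1 = k by omega] at hA'
  refine h.split_of (fun _ => 0) (fun t => unitRow 0 t + unitRow k t) (fun _ => 0)
    rfl (by simp [unitRow]) rfl (by intros; omega)
    (unitRow_add_part (show Y 0 < Y 1 by omega) (by omega) (by omega)) (by intros; omega) ?_ ?_ ?_ ?_
  · intro a b hab hb hc
    have := h.long a k
    have := hA b
    unfold unitRow
    split_ifs <;> omega
  · intro a b ha hab hb hc
    have := h.long a k
    have := hA b
    unfold unitRow
    split_ifs <;> omega
  · intro a b hab ha hb hc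
    have hD := h.double (k + 1) k
    have := hA b
    unfold unitRow
    simp only [Nat.add_assoc, Nat.reduceAdd] at hD
    obtain rfl | ha := ha.eq_or_lt
    · simp only [Nat.add_assoc, Nat.reduceAdd] at hc ⊢
      obtain rfl | hb := hb.eq_or_lt <;> split_ifs <;> omega
    · split_ifs <;> omega
  · unfold unitRow
    split_ifs <;> omega

theorem RowSystem.split_x_y (h : RowSystem k m X Y Z) (hk : 1 ≤ k)
    (hx : 0 < X 1) (hz : Z k = Z (k + 1)) (hy : Y k < Y (k + 1)) (hx' : X (k + 2) = X (k + 1)) :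
    RowSplit k 1 (m - 1) X Y Z := by
  have hX0 := h.x_zero
  refine h.split_of (unitRow 0) (unitRow k) (fun _ => 0)
    (by simp [unitRow]) (by simp [unitRow]) rfl (unitRow_part (show X 0 < X 1 by omega))
    (unitRow_part hy) (by intros; omega) ?_ ?_ ?_ ?_
  · intros
    unfold unitRow
    split_ifs <;> omega
  · intro a b ha hab hb hc
    have := h.short a b
    unfold unitRow
    split_ifs <;> omega
  · intro a b hab ha hb hc
    have := h.double k b
    unfold unitRow
    obtain rfl | ha := ha.eq_or_lt
    · simp only [Nat.add_assoc, Nat.reduceAdd] at hc ⊢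
      split_ifs <;> omega
    · split_ifs <;> omega
  · unfold unitRow
    split_ifs <;> omega

theorem RowSystem.split_x_x (h : RowSystem k m X Y Z) (hk : 1 ≤ k)
    (hx : 0 < X 1) (hz : Z k = Z (k + 1)) (hy : Y k = Y (k + 1)) (hxm : m < X (k + 1)) :
    RowSplit k 1 (m - 1) X Y Z := by
  have hX0 := h.x_zero
  have hA a := h.short a (k - 1)
  have hZ : Z (k - 1) ≤ Z k := h.z_mono (by omega)
  have hY : Y (k - 1) ≤ Y k := h.y_mono (by omega)
  rw [show k - 1 + 1 = k by omega] at hA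
  have hA' := hA (k - 1) le_rfl (by omega)
  rw [show k - 1 + 1 = k by omega] at hA'
  refine h.split_of (fun t => unitRow 0 t + unitRow k t) (fun _ => 0) (fun _ => 0)
    (by simp [unitRow]) rfl rfl
    (unitRow_add_part (show X 0 < X 1 by omega) (by omega) (by omega)) (by intros; omega)
    (by intros; omega) ?_ ?_ ?_ ?_
  · intros
    unfold unitRow
    split_ifs <;> omega
  · intro a b ha hab hb hc
    have := h.short a b
    have := hA a
    unfold unitRow
    obtain rfl | hb := hb.eq_or_lt <;> split_ifs <;> omega
  · intro a b hab ha hb hc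
    have := h.double k b
    have := hA a
    unfold unitRow
    split_ifs <;> omega
  · unfold unitRow
    split_ifs <;> omega

/-- The strengthened single path inequalities, with both corner entries included. -/
def RowPlain (k : ℕ) (m : ℤ) (X Y Z : ℕ → ℤ) : Prop :=
  ∀ a b, a ≤ b → b ≤ k → X (a + 1) + Y (b + 1) - Y a + Z (k + 1) - Z b ≤ m

theorem RowSystem.split_of_plain (h : RowSystem k m X Y Z) (hp : RowPlain k m X Y Z)
    (U V W : ℕ → ℤ) (hU0 : U 0 = 0) (hV0 : V 0 = 0) (hW0 : W 0 = 0)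
    (hU : ∀ t, X t ≤ X (t + 1) → U t ≤ U (t + 1) ∧ X t - U t ≤ X (t + 1) - U (t + 1))
    (hV : ∀ t, Y t ≤ Y (t + 1) → V t ≤ V (t + 1) ∧ Y t - V t ≤ Y (t + 1) - V (t + 1))
    (hW : ∀ t, Z t ≤ Z (t + 1) → W t ≤ W (t + 1) ∧ Z t - W t ≤ Z (t + 1) - W (t + 1))
    (hs : ∀ a b, a ≤ b → b ≤ k → X (a + 1) + Y (b + 1) - Y a + Z (k + 1) - Z b ≤ m →
      U (a + 1) + V (b + 1) - V a + W (k + 1) - W b ≤ 1 ∧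
      X (a + 1) + Y (b + 1) - Y a + Z (k + 1) - Z b ≤
        m - 1 + (U (a + 1) + V (b + 1) - V a + W (k + 1) - W b))
    (hd : ∀ a b, b < a → a ≤ k + 1 → b ≤ k →
      X (a + 1) + Y (k + 2) - Y a + Y (b + 1) + Z (k + 1) - Z b ≤ 2 * m →
      U (a + 1) + V (k + 2) - V a + V (b + 1) + W (k + 1) - W b ≤ 2 ∧
      X (a + 1) + Y (k + 2) - Y a + Y (b + 1) + Z (k + 1) - Z b ≤
        2 * m - 2 + (U (a + 1) + V (k + 2) - V a + V (b + 1) + W (k + 1) - W b))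
    (ht : U (k + 3) + V (k + 2) = 2) :
    RowSplit k 1 (m - 1) X Y Z := by
  have hX0 := h.x_zero
  refine h.split_of U V W hU0 hV0 hW0 hU hV hW ?_ ?_ hd ht
  · intro a b hab hb _
    have := hs a b hab hb.le (hp a b hab hb.le)
    have := hW k (h.z_mono (Nat.le_succ k))
    omega
  · intro a b _ hab hb _
    have := hs a b hab hb (hp a b hab hb)
    have := hU 0 (h.x_mono (Nat.le_succ 0))
    rw [zero_add] at this
    omega

theorem min_one_part (t : ℕ) (ht : X t ≤ X (t + 1)) :
    min 1 (X t) ≤ min 1 (X (t + 1)) ∧ X t - min 1 (X t) ≤ X (t + 1) - min 1 (X (t + 1)) := by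
  omega

theorem min_one_trunc_part (j t : ℕ) (ht : X t ≤ X (t + 1)) :
    min 1 (X (min t j)) ≤ min 1 (X (min (t + 1) j)) ∧
      X t - min 1 (X (min t j)) ≤ X (t + 1) - min 1 (X (min (t + 1) j)) := by
  rcases le_or_gt j t with hj | hj
  · rw [min_eq_right hj, min_eq_right (show j ≤ t + 1 by omega)]
    omega
  · rw [min_eq_left hj.le, min_eq_left (show t + 1 ≤ j by omega)]
    omega

theorem RowSystem.split_first_x_y (h : RowSystem k m X Y Z) (hp : RowPlain k m X Y Z)
    (hm : 1 ≤ m) (hT : X (k + 3) + Y (k + 2) = 2 * m) (hXm : m ≤ X (k + 3)) {j : ℕ}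
    (hjk : j ≤ k) (hXj : X (j + 1) = 0) (hYj : Y j = 0) (hYj' : 0 < Y (j + 1)) :
    RowSplit k 1 (m - 1) X Y Z := by
  have hX0 := h.x_zero
  have hY0 := h.y_zero
  have hZ0 := h.z_zero
  have hX1 : 0 ≤ X 1 := hX0 ▸ h.x_mono (by omega)
  have hY1 : 0 ≤ Y 1 := hY0 ▸ h.y_mono (by omega)
  have hYk : Y (j + 1) ≤ Y (k + 2) := h.y_mono (by omega)
  have hC b := hp 0 b
  have hD a := h.double a 0
  simp only [zero_add] at hC hD
  have hC0 := hC 0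
  have hCj := hC j
  rw [zero_add] at hC0
  refine h.split_of_plain hp (fun t => min 1 (X t)) (fun t => min 1 (Y t))
    (fun t => min 1 (Z (min t j))) (by simp [hX0]) (by simp [hY0]) (by simp [hZ0])
    min_one_part min_one_part (min_one_trunc_part j) ?_ ?_ (by omega)
  · intro a b hab hb hc
    have hCb := hC b
    have hXa : 0 ≤ X (a + 1) := hX0 ▸ h.x_mono (by omega)
    have hYa : 0 ≤ Y a := hY0 ▸ h.y_mono (by omega)
    have hYb : Y a ≤ Y (b + 1) := h.y_mono (by omega)
    have hZb : 0 ≤ Z b := hZ0 ▸ h.z_mono (by omega)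
    have hZj : 0 ≤ Z j := hZ0 ▸ h.z_mono (by omega)
    have hXaj : a ≤ j → X (a + 1) ≤ X (j + 1) := fun _ => h.x_mono (by omega)
    have hYaj : j < a → Y (j + 1) ≤ Y a := fun _ => h.y_mono (by omega)
    have hYbj : b < j → Y (b + 1) ≤ Y j := fun _ => h.y_mono (by omega)
    have hYbj' : j ≤ b → Y (j + 1) ≤ Y (b + 1) := fun _ => h.y_mono (by omega)
    have hZbj : b ≤ j → Z b ≤ Z j := fun _ => h.z_mono (by omega)
    rw [min_eq_right (show j ≤ k + 1 by omega)]
    rcases le_or_gt j b with hjb | hjb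
    · rw [min_eq_right hjb]
      omega
    · rw [min_eq_left hjb.le]
      omega
  · intro a b hab ha hb hc
    have hCb := hC b
    have hDa := hD a
    have hDj := h.double a j
    have hXa : 0 ≤ X (a + 1) := hX0 ▸ h.x_mono (by omega)
    have hYb0 : 0 ≤ Y (b + 1) := hY0 ▸ h.y_mono (by omega)
    have hYb : Y (b + 1) ≤ Y a := h.y_mono (by omega)
    have hZb : 0 ≤ Z b := hZ0 ▸ h.z_mono (by omega)
    have hZj : 0 ≤ Z j := hZ0 ▸ h.z_mono (by omega)
    have hXaj : a ≤ j → X (a + 1) ≤ X (j + 1) := fun _ => h.x_mono (by omega)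
    have hYaj : j < a → Y (j + 1) ≤ Y a := fun _ => h.y_mono (by omega)
    have hYbj : b < j → Y (b + 1) ≤ Y j := fun _ => h.y_mono (by omega)
    have hYbj' : j ≤ b → Y (j + 1) ≤ Y (b + 1) := fun _ => h.y_mono (by omega)
    have hZbj : b ≤ j → Z b ≤ Z j := fun _ => h.z_mono (by omega)
    rw [min_eq_right (show j ≤ k + 1 by omega)]
    rcases le_or_gt j b with hjb | hjb
    · rw [min_eq_right hjb]
      omega
    · rw [min_eq_left hjb.le]
      omega

theorem RowSystem.split_top_top (h : RowSystem k m X Y Z) (hp : RowPlain k m X Y Z)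
    (hm : 1 ≤ m) (hT : X (k + 3) + Y (k + 2) = 2 * m) (hXm : m < X (k + 3))
    (hX : X (k + 2) = 0) (hY : Y (k + 1) = 0) :
    RowSplit k 1 (m - 1) X Y Z := by
  have hX0 := h.x_zero
  have hY0 := h.y_zero
  have hZ0 := h.z_zero
  have hX1 : 0 ≤ X 1 := hX0 ▸ h.x_mono (by omega)
  have hY1 : 0 ≤ Y 1 := hY0 ▸ h.y_mono (by omega)
  have hC0 := hp 0 0
  rw [zero_add] at hC0
  refine h.split_of_plain hp (fun t => unitRow (k + 2) t + unitRow (k + 2) t) (fun _ => 0)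
    (fun t => min 1 (Z t)) (by simp [unitRow]) rfl (by simp [hZ0])
    (unitRow_add_part (show X (k + 2) < X (k + 3) by omega) (show X (k + 2) < X (k + 3) by omega)
      fun _ => show X (k + 2) + 2 ≤ X (k + 3) by omega) (by intros; omega) min_one_part ?_ ?_
    (by simp [unitRow])
  all_goals
    intro a b hab
    intros
    have hXa : X (a + 1) ≤ X (k + 2) := h.x_mono (by omega)
    have hYa : 0 ≤ Y a := hY0 ▸ h.y_mono (by omega)
    have hYb : Y (b + 1) ≤ Y (k + 1) := h.y_mono (by omega)
    have hZb : 0 ≤ Z b := hZ0 ▸ h.z_mono (by omega)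
    have hZbk : Z b ≤ Z (k + 1) := h.z_mono (by omega)
    unfold unitRow
    split_ifs <;> omega

theorem RowSystem.split_top_y (h : RowSystem k m X Y Z) (hp : RowPlain k m X Y Z)
    (hm : 1 ≤ m) (hT : X (k + 3) + Y (k + 2) = 2 * m) (hXm : X (k + 3) = m)
    (hX : X (k + 2) = 0) (hY : Y (k + 1) = 0) :
    RowSplit k 1 (m - 1) X Y Z := by
  have hX0 := h.x_zero
  have hY0 := h.y_zero
  have hZ0 := h.z_zero
  have hX1 : 0 ≤ X 1 := hX0 ▸ h.x_mono (by omega)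
  have hY1 : 0 ≤ Y 1 := hY0 ▸ h.y_mono (by omega)
  have hC0 := hp 0 0
  rw [zero_add] at hC0
  refine h.split_of_plain hp (unitRow (k + 2)) (unitRow (k + 1))
    (fun t => min 1 (Z t)) (by simp [unitRow]) (by simp [unitRow]) (by simp [hZ0])
    (unitRow_part (show X (k + 2) < X (k + 3) by omega))
    (unitRow_part (show Y (k + 1) < Y (k + 2) by omega)) min_one_part ?_ ?_
    (by simp [unitRow])
  all_goals
    intro a b hab
    intros
    have hXa : X (a + 1) ≤ X (k + 2) := h.x_mono (by omega)
    have hYa : 0 ≤ Y a := hY0 ▸ h.y_mono (by omega)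
    have hYb : Y (b + 1) ≤ Y (k + 1) := h.y_mono (by omega)
    have hZb : 0 ≤ Z b := hZ0 ▸ h.z_mono (by omega)
    have hZbk : Z b ≤ Z (k + 1) := h.z_mono (by omega)
    unfold unitRow
    split_ifs <;> omega

theorem min_one_add_unitRow_part {i : ℕ} (hX : Monotone X) (hX0 : X 0 = 0) (hi : X i < X (i + 1))
    (hi' : X i = 0 → 2 ≤ X (i + 1)) (t : ℕ) (ht : X t ≤ X (t + 1)) :
    min 1 (X t) + unitRow i t ≤ min 1 (X (t + 1)) + unitRow i (t + 1) ∧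
      X t - (min 1 (X t) + unitRow i t) ≤
        X (t + 1) - (min 1 (X (t + 1)) + unitRow i (t + 1)) := by
  have h0 : X 0 ≤ X i := hX (by omega)
  rcases unitRow_step i t with ⟨rfl, h1⟩ | h1 <;> omega

theorem RowSystem.split_first_x_top (h : RowSystem k m X Y Z) (hp : RowPlain k m X Y Z)
    (hm : 1 ≤ m) {i : ℕ} (hik : i ≤ k + 1) (hT : X (k + 3) + Y (k + 2) = 2 * m)
    (hXi : X i = 0) (hXi' : 0 < X (i + 1)) (hYi : Y i = 0)
    (hmax : ∀ a ≤ k + 1, X (a + 1) - Y a + m ≤ X (k + 3)) :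
    RowSplit k 1 (m - 1) X Y Z := by
  have hX0 := h.x_zero
  have hY0 := h.y_zero
  have hZ0 := h.z_zero
  have hX1 : 0 ≤ X 1 := hX0 ▸ h.x_mono (by omega)
  have hY1 : 0 ≤ Y 1 := hY0 ▸ h.y_mono (by omega)
  have hXk : X (i + 1) ≤ X (k + 2) := h.x_mono (by omega)
  have hC b := hp 0 b
  simp only [zero_add] at hC
  have hC0 := hC 0
  rw [zero_add] at hC0
  have hCi := hp i
  have hCii := hp i i
  have hYi' : 0 ≤ Y (i + 1) := hY0 ▸ h.y_mono (by omega)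
  have hZi : 0 ≤ Z i := hZ0 ▸ h.z_mono (by omega)
  have hmi := hmax i hik
  have hmk := hmax (k + 1) le_rfl
  have hCk := hCi k
  have hZk : Z k ≤ Z (k + 1) := h.z_mono (by omega)
  have hYk : i = k + 1 → Y (k + 1) = Y i := fun e => by rw [e]
  have hZik : i = k + 1 → Z (k + 1) = Z i := fun e => by rw [e]
  simp only [Nat.add_assoc, Nat.reduceAdd] at hmk
  have hw : X (k + 2) < X (k + 3) := by omega
  refine h.split_of_plain hp (fun t => min 1 (X t) + unitRow (k + 2) t) (fun _ => 0)
    (fun t => min 1 (Z (min t i))) (by simp [hX0, unitRow]) rfl (by simp [hZ0])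
    (min_one_add_unitRow_part h.x_mono hX0 hw (by omega)) (by intros; omega)
    (min_one_trunc_part i) ?_ ?_ (by unfold unitRow; split_ifs <;> omega)
  · intro a b hab hb hc
    have hCb := hC b
    have hCib := hCi b
    have hXa : 0 ≤ X (a + 1) := hX0 ▸ h.x_mono (by omega)
    have hYa : 0 ≤ Y a := hY0 ▸ h.y_mono (by omega)
    have hZb : 0 ≤ Z b := hZ0 ▸ h.z_mono (by omega)
    have hXai : a < i → X (a + 1) ≤ X i := fun _ => h.x_mono (by omega)
    have hXai' : i ≤ a → X (i + 1) ≤ X (a + 1) := fun _ => h.x_mono (by omega)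
    have hYbi : b < i → Y (b + 1) ≤ Y i := fun _ => h.y_mono (by omega)
    have hZbi : b ≤ i → Z b ≤ Z i := fun _ => h.z_mono (by omega)
    have hu : unitRow (k + 2) (a + 1) = 0 := by simp [unitRow]; omega
    rw [min_eq_right (show i ≤ k + 1 by omega), hu]
    rcases le_or_gt i b with hib | hib
    · rw [min_eq_right hib]
      omega
    · rw [min_eq_left hib.le]
      omega
  · intro a b hab ha hb hc
    have hCb := hC b
    have hCib := hCi b
    have hma := hmax a ha
    have hXa : 0 ≤ X (a + 1) := hX0 ▸ h.x_mono (by omega)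
    have hYa : 0 ≤ Y a := hY0 ▸ h.y_mono (by omega)
    have hZb : 0 ≤ Z b := hZ0 ▸ h.z_mono (by omega)
    have hXai : a < i → X (a + 1) ≤ X i := fun _ => h.x_mono (by omega)
    have hXai' : i ≤ a → X (i + 1) ≤ X (a + 1) := fun _ => h.x_mono (by omega)
    have hYbi : b < i → Y (b + 1) ≤ Y i := fun _ => h.y_mono (by omega)
    have hZbi : b ≤ i → Z b ≤ Z i := fun _ => h.z_mono (by omega)
    have hu : unitRow (k + 2) (a + 1) = 0 := by simp [unitRow]; omega
    rw [min_eq_right (show i ≤ k + 1 by omega), hu]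
    rcases le_or_gt i b with hib | hib
    · rw [min_eq_right hib]
      omega
    · rw [min_eq_left hib.le]
      omega

theorem RowSystem.z_lt_of_max (h : RowSystem k m X Y Z)
    {i : ℕ} (hT : X (k + 3) + Y (k + 2) = 2 * m) (hi : 0 < i) (hXm : m ≤ X (k + 3))
    (hXi : X i = 0) {c : ℕ} (hck : c ≤ k + 1) (hc : X (k + 3) < X (c + 1) - Y c + m) :
    Z (k + 1) < m := by
  have hY0 := h.y_zero
  have hZ0 := h.z_zero
  have hY1 : 0 ≤ Y 1 := hY0 ▸ h.y_mono (by omega)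
  have hYc : 0 ≤ Y c := hY0 ▸ h.y_mono (by omega)
  have hXc : c < i → X (c + 1) ≤ X i := fun _ => h.x_mono (by omega)
  have hD := h.double c 0 (by omega) hck (by omega)
  rw [zero_add] at hD
  omega

theorem RowSystem.split_first_x_last_y (h : RowSystem k m X Y Z) (hp : RowPlain k m X Y Z)
    (hm : 1 ≤ m) {i : ℕ} (hik : i ≤ k + 1) (hT : X (k + 3) + Y (k + 2) = 2 * m)
    (hXm : m ≤ X (k + 3)) (hXi' : 0 < X (i + 1)) (hYi : Y i = 0)
    (hz : 0 < i → Z (k + 1) < m) (hy : Y (k + 1) < Y (k + 2)) :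
    RowSplit k 1 (m - 1) X Y Z := by
  have hX0 := h.x_zero
  have hY0 := h.y_zero
  have hZ0 := h.z_zero
  have hXk : X (i + 1) ≤ X (k + 3) := h.x_mono (by omega)
  refine h.split_of_plain hp (fun t => min 1 (X t)) (unitRow (k + 1)) (fun _ => 0)
    (by simp [hX0]) (by simp [unitRow]) rfl min_one_part (unitRow_part hy) (by intros; omega) ?_ ?_
    (by unfold unitRow; split_ifs <;> omega)
  · intro a b hab hb hc
    have hCib := hp i b
    have hXa : 0 ≤ X (a + 1) := hX0 ▸ h.x_mono (by omega)
    have hYa : 0 ≤ Y a := hY0 ▸ h.y_mono (by omega)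
    have hZb : 0 ≤ Z b := hZ0 ▸ h.z_mono (by omega)
    have hXai' : i ≤ a → X (i + 1) ≤ X (a + 1) := fun _ => h.x_mono (by omega)
    have hYbi : b < i → Y (b + 1) ≤ Y i := fun _ => h.y_mono (by omega)
    unfold unitRow
    split_ifs <;> omega
  · intro a b hab ha hb hc
    have hXa : 0 ≤ X (a + 1) := hX0 ▸ h.x_mono (by omega)
    have hYa : 0 ≤ Y a := hY0 ▸ h.y_mono (by omega)
    have hZb : 0 ≤ Z b := hZ0 ▸ h.z_mono (by omega)
    have hXai' : i ≤ a → X (i + 1) ≤ X (a + 1) := fun _ => h.x_mono (by omega)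
    have hYbi : b < i → Y (b + 1) ≤ Y i := fun _ => h.y_mono (by omega)
    unfold unitRow
    split_ifs <;> omega

theorem RowSystem.split_first_x_last_x (h : RowSystem k m X Y Z) (hp : RowPlain k m X Y Z)
    (hm : 1 ≤ m) {i : ℕ} (hik : i ≤ k + 1) (hT : X (k + 3) + Y (k + 2) = 2 * m)
    (hXi : X i = 0) (hXi' : 0 < X (i + 1)) (hYi : Y i = 0)
    (hz : 0 < i → Z (k + 1) < m) (hy : Y (k + 1) = Y (k + 2))
    {c : ℕ} (hck : c ≤ k + 1) (hc : X (k + 3) < X (c + 1) - Y c + m) :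
    RowSplit k 1 (m - 1) X Y Z := by
  have hX0 := h.x_zero
  have hY0 := h.y_zero
  have hZ0 := h.z_zero
  have hZk : Z k ≤ Z (k + 1) := h.z_mono (by omega)
  have hYk : Y k ≤ Y (k + 1) := h.y_mono (by omega)
  have hXk : X (k + 2) ≤ X (k + 3) := h.x_mono (by omega)
  have hCck := hp c k
  have hCkk := hp k k
  have hCik := hp i k
  have hYik : i = k + 1 → Y (k + 1) = Y i := fun e => by rw [e]
  have hXk : m < X (k + 2) := by
    obtain rfl | hck := hck.eq_or_lt
    · simp only [Nat.add_assoc, Nat.reduceAdd] at hc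
      omega
    · omega
  refine h.split_of_plain hp (fun t => min 1 (X t) + unitRow (k + 1) t) (fun _ => 0) (fun _ => 0)
    (by simp [hX0, unitRow]) rfl rfl
    (min_one_add_unitRow_part h.x_mono hX0 (show X (k + 1) < X (k + 2) by omega)
      fun _ => show 2 ≤ X (k + 2) by omega)
    (by intros; omega) (by intros; omega) ?_ ?_
    (by unfold unitRow; split_ifs <;> omega)
  · intro a b hab hb hc
    have hCib := hp i b
    have hXa : 0 ≤ X (a + 1) := hX0 ▸ h.x_mono (by omega)
    have hYa : 0 ≤ Y a := hY0 ▸ h.y_mono (by omega)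
    have hZb : 0 ≤ Z b := hZ0 ▸ h.z_mono (by omega)
    have hXai' : i ≤ a → X (i + 1) ≤ X (a + 1) := fun _ => h.x_mono (by omega)
    have hYbi : b < i → Y (b + 1) ≤ Y i := fun _ => h.y_mono (by omega)
    unfold unitRow
    split_ifs <;> omega
  · intro a b hab ha hb hc
    have hDk := h.double (k + 1) b
    simp only [Nat.add_assoc, Nat.reduceAdd] at hDk
    have hCak := hp a k
    have hXa : 0 ≤ X (a + 1) := hX0 ▸ h.x_mono (by omega)
    have hYa : 0 ≤ Y a := hY0 ▸ h.y_mono (by omega)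
    have hZb : 0 ≤ Z b := hZ0 ▸ h.z_mono (by omega)
    have hXai : a < i → X (a + 1) ≤ X i := fun _ => h.x_mono (by omega)
    have hXai' : i ≤ a → X (i + 1) ≤ X (a + 1) := fun _ => h.x_mono (by omega)
    have hYbi : b < i → Y (b + 1) ≤ Y i := fun _ => h.y_mono (by omega)
    unfold unitRow
    obtain rfl | ha := ha.eq_or_lt
    · simp only [Nat.add_assoc, Nat.reduceAdd] at *
      split_ifs <;> omega
    · split_ifs <;> omega

theorem RowSystem.split_last_y_last_y (h : RowSystem k m X Y Z) (hp : RowPlain k m X Y Z)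
    (hT : X (k + 3) + Y (k + 2) = 2 * m) (hXm : X (k + 3) < m)
    (hmax : ∀ a b, a ≤ k + 1 → b ≤ k →
      X (a + 1) - Y a + (Y (b + 1) + Z (k + 1) - Z b) ≤ X (k + 3)) :
    RowSplit k 1 (m - 1) X Y Z := by
  have hX0 := h.x_zero
  have hY0 := h.y_zero
  have hX1 : 0 ≤ X 1 := hX0 ▸ h.x_mono (by omega)
  have hZk : Z k ≤ Z (k + 1) := h.z_mono (by omega)
  have hmk := hmax 0 k (by omega) le_rfl
  rw [zero_add] at hmk
  have hy : Y (k + 1) + 2 ≤ Y (k + 2) := by omega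
  refine h.split_of_plain hp (fun _ => 0) (fun t => unitRow (k + 1) t + unitRow (k + 1) t)
    (fun _ => 0) rfl (by simp [unitRow]) rfl (by intros; omega)
    (unitRow_add_part (show Y (k + 1) < Y (k + 2) by omega)
      (show Y (k + 1) < Y (k + 2) by omega) fun _ => hy) (by intros; omega) ?_ ?_
    (by simp [unitRow])
  all_goals
    intro a b hab
    intros
    have := hmax a b
    unfold unitRow
    split_ifs <;> omega

theorem RowSystem.split_y_last_y (h : RowSystem k m X Y Z) (hp : RowPlain k m X Y Z)
    (hT : X (k + 3) + Y (k + 2) = 2 * m) (hXm : X (k + 3) < m)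
    {a₀ b₀ : ℕ} (ha₀ : a₀ ≤ k + 1) (hb₀ : b₀ ≤ k)
    (h₀ : X (k + 3) < X (a₀ + 1) - Y a₀ + (Y (b₀ + 1) + Z (k + 1) - Z b₀)) :
    RowSplit k 1 (m - 1) X Y Z := by
  have hX0 := h.x_zero
  have hY0 := h.y_zero
  have hX1 : 0 ≤ X 1 := hX0 ▸ h.x_mono (by omega)
  have hZk : Z k ≤ Z (k + 1) := h.z_mono (by omega)
  have hCk := hp 0 k (by omega) le_rfl
  rw [zero_add] at hCk
  obtain ⟨c, hck, hc, hc'⟩ : ∃ c ≤ k + 1, (∀ a ≤ k + 1, X (a + 1) - Y a ≤ X (c + 1) - Y c) ∧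
      ∀ a ≤ k + 1, c < a → X (a + 1) - Y a < X (c + 1) - Y c := by
    obtain ⟨c, hc, hmax⟩ := Finset.exists_max_image (Finset.range (k + 2))
      (fun a => toLex (X (a + 1) - Y a, a)) ⟨0, by simp⟩
    simp only [Finset.mem_range, Prod.Lex.le_iff, ofLex_toLex] at hc hmax
    refine ⟨c, by omega, fun a ha => ?_, fun a ha hca => ?_⟩ <;>
    · have := hmax a (by omega)
      omega
  have hflat b (hcb : c ≤ b) (hb : b ≤ k) (hY : Y (b + 1) = Y c) :
      X (c + 1) - Y c + (Y (b + 1) + Z (k + 1) - Z b) ≤ X (k + 3) := by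
    have := h.double (b + 1) b (by omega) (by omega) hb
    have : X (c + 1) ≤ X (b + 1 + 1) := h.x_mono (by omega)
    omega
  have hcb₀ : c ≤ b₀ := by
    by_contra hlt
    have := h.double c b₀ (by omega) hck hb₀
    have := hc a₀ ha₀
    omega
  have hYc : Y c < Y (b₀ + 1) := by
    have : Y c ≤ Y (b₀ + 1) := h.y_mono (by omega)
    have := hflat b₀ hcb₀ hb₀
    have := hc a₀ ha₀
    omega
  obtain ⟨j, hcj, hjk, hYj, hYj'⟩ : ∃ j, c ≤ j ∧ j ≤ k ∧ Y j = Y c ∧ Y c < Y (j + 1) := by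
    have hex : ∃ j, Y c < Y (j + 1) := ⟨b₀, hYc⟩
    classical
    have hcj : c ≤ Nat.find hex := by
      by_contra hlt
      have : Y (Nat.find hex + 1) ≤ Y c := h.y_mono (by omega)
      have := Nat.find_spec hex
      omega
    refine ⟨Nat.find hex, hcj, (Nat.find_min' hex hYc).trans hb₀, ?_, Nat.find_spec hex⟩
    refine le_antisymm ?_ (h.y_mono hcj)
    rcases hj : Nat.find hex with _ | i
    · rw [hY0, ← hY0]
      exact h.y_mono (by omega)
    · exact not_lt.1 (Nat.find_min hex (m := i) (by omega))
  have hYk : Y (j + 1) ≤ Y (k + 1) := h.y_mono (by omega)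
  refine h.split_of_plain hp (fun _ => 0) (fun t => unitRow j t + unitRow (k + 1) t)
    (fun _ => 0) rfl (by simp [unitRow]) rfl (by intros; omega)
    (unitRow_add_part (by omega) (show Y (k + 1) < Y (k + 2) by omega) (by omega))
    (by intros; omega) ?_ ?_ (by unfold unitRow; split_ifs <;> omega)
  all_goals
    intro a b hab
    intros
    have hca := hc a
    have hca' := hc' a
    have hfl := hflat b
    have hD := h.double c b
    have hC := hp c b
    have hYcb : c ≤ b → Y c ≤ Y (b + 1) := fun _ => h.y_mono (by omega)
    have hYbj : b < j → Y (b + 1) ≤ Y j := fun _ => h.y_mono (by omega)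
    unfold unitRow
    split_ifs <;> omega

theorem RowSystem.split_of_rowPlain (h : RowSystem k m X Y Z) (hp : RowPlain k m X Y Z)
    (hm : 1 ≤ m) (hT : X (k + 3) + Y (k + 2) = 2 * m) :
    RowSplit k 1 (m - 1) X Y Z := by
  classical
  have hX0 := h.x_zero
  have hY0 := h.y_zero
  rcases lt_or_ge (X (k + 3)) m with hXm | hXm
  · by_cases hmax : ∀ a b, a ≤ k + 1 → b ≤ k →
      X (a + 1) - Y a + (Y (b + 1) + Z (k + 1) - Z b) ≤ X (k + 3)
    · exact h.split_last_y_last_y hp hT hXm hmax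
    · push Not at hmax
      obtain ⟨a, b, ha, hb, hab⟩ := hmax
      exact h.split_y_last_y hp hT hXm ha hb hab
  by_cases hex : ∃ j, j ≤ k ∧ X (j + 1) = 0 ∧ 0 < Y (j + 1)
  · obtain ⟨hjk, hXj, hYj⟩ := Nat.find_spec hex
    refine h.split_first_x_y hp hm hT hXm hjk hXj ?_ hYj
    rcases hj : Nat.find hex with _ | i
    · exact hY0
    · have hmin := Nat.find_min hex (m := i) (by omega)
      have hXi : X (i + 1) ≤ X (Nat.find hex + 1) := h.x_mono (by omega)
      have hXi' : 0 ≤ X (i + 1) := hX0 ▸ h.x_mono (by omega)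
      have hYi : 0 ≤ Y (i + 1) := hY0 ▸ h.y_mono (by omega)
      by_contra hne
      exact hmin ⟨by omega, by omega, by omega⟩
  push Not at hex
  by_cases hXk : X (k + 2) = 0
  · have hXk' : X (k + 1) = 0 :=
      le_antisymm (hXk ▸ h.x_mono (by omega)) (hX0 ▸ h.x_mono (by omega))
    have hYk : Y (k + 1) = 0 := le_antisymm (hex k le_rfl hXk') (hY0 ▸ h.y_mono (by omega))
    rcases hXm.eq_or_lt with hXm | hXm
    · exact h.split_top_y hp hm hT hXm.symm hXk hYk
    · exact h.split_top_top hp hm hT hXm hXk hYk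
  have hXk' : 0 < X (k + 2) := lt_of_le_of_ne (hX0 ▸ h.x_mono (by omega)) (Ne.symm hXk)
  obtain ⟨i, hik, hXi, hXi', hYi⟩ : ∃ i, i ≤ k + 1 ∧ X i = 0 ∧ 0 < X (i + 1) ∧ Y i = 0 := by
    have hi : ∃ i, 0 < X (i + 1) := ⟨k + 1, hXk'⟩
    have hik : Nat.find hi ≤ k + 1 := Nat.find_min' hi hXk'
    have hXi : X (Nat.find hi) = 0 := by
      rcases hj : Nat.find hi with _ | i
      · exact hX0
      · exact le_antisymm (not_lt.1 (Nat.find_min hi (m := i) (by omega)))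
          (hX0 ▸ h.x_mono (by omega))
    refine ⟨Nat.find hi, hik, hXi, Nat.find_spec hi, ?_⟩
    rcases hj : Nat.find hi with _ | i
    · exact hY0
    · exact le_antisymm (hex i (by omega) (hj ▸ hXi)) (hY0 ▸ h.y_mono (by omega))
  by_cases hmax : ∀ a ≤ k + 1, X (a + 1) - Y a + m ≤ X (k + 3)
  · exact h.split_first_x_top hp hm hik hT hXi hXi' hYi hmax
  push Not at hmax
  obtain ⟨c, hck, hc⟩ := hmax
  have hz (hi : 0 < i) := h.z_lt_of_max hT hi hXm hXi hck hc
  rcases (h.y_mono (show k + 1 ≤ k + 2 by omega)).eq_or_lt with hy | hy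
  · exact h.split_first_x_last_x hp hm hik hT hXi hXi' hYi hz hy hck hc
  · exact h.split_first_x_last_y hp hm hik hT hXm hXi' hYi hz hy

theorem RowSystem.split_or (h : RowSystem k m X Y Z) (hk : 1 ≤ k) (hm : 1 ≤ m)
    (hT : X (k + 3) + Y (k + 2) = 2 * m) :
    RowSplit k 1 (m - 1) X Y Z ∨
      (0 < X 1 ∧ Z k = Z (k + 1) ∧ Y k < Y (k + 1) ∧ X (k + 1) < X (k + 2)) := by
  have hX0 := h.x_zero
  have hY0 := h.y_zero
  have hX1 : 0 ≤ X 1 := hX0 ▸ h.x_mono (by omega)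
  have hX2 : X 1 ≤ X 2 := h.x_mono (by omega)
  have hY1 : 0 ≤ Y 1 := hY0 ▸ h.y_mono (by omega)
  have hZk : Z (k - 1) ≤ Z k := h.z_mono (by omega)
  have hB b := h.long 1 b
  simp only [Nat.reduceAdd] at hB
  have hA a := h.short a (k - 1)
  rw [show k - 1 + 1 = k by omega] at hA
  rcases hX1.eq_or_lt with hx | hx <;> rcases (h.z_mono (show k ≤ k + 1 by omega)).eq_or_lt with hz | hz
  · left
    rcases lt_or_ge m (Y (k + 1)) with hy | hy
    · exact h.split_y_y hk hx.symm hz hy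
    refine h.split_of_rowPlain (fun a b hab hb => ?_) hm hT
    have h1 := h.short a b hab
    have h2 := h.long a b
    obtain rfl | hb := hb.eq_or_lt
    · obtain rfl | ha := Nat.eq_zero_or_pos a
      · rw [zero_add]
        omega
      · omega
    · omega
  · left
    rcases hY1.eq_or_lt with hy | hy
    · rcases lt_or_ge m (Z (k + 1)) with hzm | hzm
      · exact h.split_z_z hk hT hx.symm hy.symm hz hzm
      refine h.split_of_rowPlain (fun a b hab hb => ?_) hm hT
      have h1 := h.long a b
      have h2 := hB b
      have hZ0 := h.z_zero
      obtain rfl | ha := Nat.eq_zero_or_pos a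
      · obtain rfl | hb := Nat.eq_zero_or_pos b
        · simp only [zero_add]
          omega
        · rw [zero_add]
          omega
      · omega
    · exact h.split_y_z hk hT hx.symm hy hz
  · rcases (h.y_mono (show k ≤ k + 1 by omega)).eq_or_lt with hy | hy
    · left
      rcases lt_or_ge m (X (k + 1)) with hxm | hxm
      · exact h.split_x_x hk hx hz hy hxm
      refine h.split_of_rowPlain (fun a b hab hb => ?_) hm hT
      have h1 := h.short a b hab
      have h2 := hA a
      obtain rfl | hb := hb.eq_or_lt
      · obtain rfl | ha := hab.eq_or_lt <;> omega
      · omega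
    · rcases (h.x_mono (show k + 1 ≤ k + 2 by omega)).eq_or_lt with hx' | hx'
      · exact Or.inl (h.split_x_y hk hx hz hy hx'.symm)
      · exact Or.inr ⟨hx, hz, hy, hx'⟩
  · exact Or.inl (h.split_x_z hk hT hx hz)

theorem RowSystem.add {l : ℤ} {U V W : ℕ → ℤ} (h : RowSystem k l U V W) (h' : RowSystem k m X Y Z) :
    RowSystem k (l + m) (U + X) (V + Y) (W + Z) := by
  refine ⟨by simp [h.x_zero, h'.x_zero], by simp [h.y_zero, h'.y_zero],
    by simp [h.z_zero, h'.z_zero], h.x_mono.add h'.x_mono, h.y_mono.add h'.y_mono,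
    h.z_mono.add h'.z_mono, fun a b h1 h2 => ?_, fun a b h1 h2 h3 => ?_,
    fun a b h1 h2 h3 => ?_, ?_⟩ <;> simp only [Pi.add_apply]
  · linarith [h.short a b h1 h2, h'.short a b h1 h2]
  · linarith [h.long a b h1 h2 h3, h'.long a b h1 h2 h3]
  · linarith [h.double a b h1 h2 h3, h'.double a b h1 h2 h3]
  · linarith [h.top, h'.top]

/-- Adding units to `x₀`, `y_k`, `x_{k+1}` and removing one from `x_{k+2}` raises the level by
one. -/
theorem RowSystem.twist (h : RowSystem k m X Y Z) (hk : 1 ≤ k) (hz : Z k = Z (k + 1))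
    (hw : X (k + 2) < X (k + 3)) :
    RowSystem k (m + 1) (X + unitRow 0 + unitRow (k + 1) - unitRow (k + 2)) (Y + unitRow k) Z := by
  refine ⟨by simp [h.x_zero, unitRow], by simp [h.y_zero, unitRow], h.z_zero,
    monotone_nat_of_le_succ fun t => ?_, monotone_nat_of_le_succ fun t => ?_,
    h.z_mono, fun a b h1 h2 => ?_, fun a b h1 h2 h3 => ?_,
    fun a b h1 h2 h3 => ?_, ?_⟩ <;> simp only [Pi.add_apply, Pi.sub_apply]
  · have hX : X t ≤ X (t + 1) := h.x_mono (by omega)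
    have h0 := unitRow_step 0 t
    have h1 := unitRow_step (k + 1) t
    rcases unitRow_step (k + 2) t with ⟨rfl, h2⟩ | h2
    · simp only [Nat.add_assoc, Nat.reduceAdd] at *
      omega
    · omega
  · have hY : Y t ≤ Y (t + 1) := h.y_mono (by omega)
    have := unitRow_step k t
    omega
  · have := h.short a b h1 h2
    unfold unitRow
    split_ifs <;> omega
  · have := h.long a b h1 h2 h3
    unfold unitRow
    split_ifs <;> omega
  · have h4 := h.double a b h1 h2 h3
    have ht := h.top
    unfold unitRow
    obtain rfl | h2 := h2.eq_or_lt
    · obtain rfl | h3 := h3.eq_or_lt <;> simp only [Nat.add_assoc, Nat.reduceAdd] at * <;>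
        split_ifs <;> omega
    · split_ifs <;> omega
  · have := h.top
    unfold unitRow
    split_ifs <;> omega

theorem RowSystem.untwist (h : RowSystem k m X Y Z) (hk : 1 ≤ k) (hx : 0 < X 1)
    (hz : Z k = Z (k + 1)) (hy : Y k < Y (k + 1)) (hx' : X (k + 1) < X (k + 2)) :
    RowSystem k (m - 1) (X - unitRow 0 - unitRow (k + 1) + unitRow (k + 2)) (Y - unitRow k) Z := by
  have hX0 := h.x_zero
  refine ⟨by simp [h.x_zero, unitRow], by simp [h.y_zero, unitRow], h.z_zero,
    monotone_nat_of_le_succ fun t => ?_, monotone_nat_of_le_succ fun t => ?_,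
    h.z_mono, fun a b h1 h2 => ?_, fun a b h1 h2 h3 => ?_,
    fun a b h1 h2 h3 => ?_, ?_⟩ <;> simp only [Pi.add_apply, Pi.sub_apply]
  · have hX := unitRow_add_part (X := X) (i := 0) (j := k + 1) (by rw [zero_add]; omega) hx'
      (by omega) t (h.x_mono (by omega))
    have := unitRow_step (k + 2) t
    omega
  · exact (unitRow_part hy t (h.y_mono (by omega))).2
  · have := h.short a b h1 h2
    unfold unitRow
    split_ifs <;> omega
  · have := h.long a b h1 h2 h3
    have := h.short a b h2
    unfold unitRow
    split_ifs <;> omega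
  · have h4 := h.double a b h1 h2 h3
    unfold unitRow
    split_ifs <;> omega
  · have := h.top
    unfold unitRow
    split_ifs <;> omega

theorem rowSystem_unit_x_y (hk : 1 ≤ k) : RowSystem k 1 (unitRow 0) (unitRow k) 0 := by
  refine ⟨by simp [unitRow], by simp [unitRow], rfl,
    monotone_nat_of_le_succ fun t => ?_, monotone_nat_of_le_succ fun t => ?_,
    monotone_const, fun a b h1 h2 => ?_, fun a b h1 h2 h3 => ?_,
    fun a b h1 h2 h3 => ?_, ?_⟩ <;> (try simp only [Pi.zero_apply]) <;> unfold unitRow <;>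
    split_ifs <;> omega

/-- A level one solution with two units in `x_{k+2}` stays one when moving one of them to
`x_{k+1}`, provided `z_k = 0`. -/
theorem RowSystem.shift_top (h : RowSystem k 1 X Y Z) (hk : 1 ≤ k) (hz : Z k = Z (k + 1))
    (hw : X (k + 2) + 2 ≤ X (k + 3)) :
    RowSystem k 1 (X + unitRow (k + 1) - unitRow (k + 2)) Y Z := by
  have hX0 := h.x_zero
  have hY0 := h.y_zero
  have hT := h.top
  have hX : 0 ≤ X (k + 2) := hX0 ▸ h.x_mono (by omega)
  have hY : 0 ≤ Y (k + 2) := hY0 ▸ h.y_mono (by omega)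
  have hX1 : 0 ≤ X 1 := hX0 ▸ h.x_mono (by omega)
  have hX1' : X 1 ≤ X (k + 2) := h.x_mono (by omega)
  refine ⟨by simp [h.x_zero, unitRow], h.y_zero, h.z_zero,
    monotone_nat_of_le_succ fun t => ?_, h.y_mono,
    h.z_mono, fun a b h1 h2 => ?_, fun a b h1 h2 h3 => ?_,
    fun a b h1 h2 h3 => ?_, ?_⟩ <;> simp only [Pi.add_apply, Pi.sub_apply]
  · have hX : X t ≤ X (t + 1) := h.x_mono (by omega)
    have h1 := unitRow_step (k + 1) t
    rcases unitRow_step (k + 2) t with ⟨rfl, h2⟩ | h2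
    · simp only [Nat.add_assoc, Nat.reduceAdd] at *
      omega
    · omega
  · have := h.short a b h1 h2
    unfold unitRow
    split_ifs <;> omega
  · have := h.long a b h1 h2 h3
    unfold unitRow
    split_ifs <;> omega
  · have hA := h.short 0 0 le_rfl (by omega)
    have hB := h.long b b
    have hX2 : X (a + 1) ≤ X (k + 2) := h.x_mono (by omega)
    have hXb : 0 ≤ X (b + 1) := hX0 ▸ h.x_mono (by omega)
    have hYa : 0 ≤ Y a := hY0 ▸ h.y_mono (by omega)
    have hYb : 0 ≤ Y b := hY0 ▸ h.y_mono (by omega)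
    have hYb' : 0 ≤ Y (b + 1) := hY0 ▸ h.y_mono (by omega)
    have hYbk : Y (b + 1) ≤ Y (k + 2) := h.y_mono (by omega)
    have hYb1 : Y b ≤ Y (b + 1) := h.y_mono (by omega)
    unfold unitRow
    obtain rfl | hb := Nat.eq_zero_or_pos b
    · simp only [zero_add] at *
      split_ifs <;> omega
    · split_ifs <;> omega
  · unfold unitRow
    split_ifs <;> omega

theorem RowSystem.split_tight (hk : 1 ≤ k) (m : ℕ) (hm : 1 ≤ m) (h : RowSystem k m X Y Z)
    (hT : X (k + 3) + Y (k + 2) = 2 * m) :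
    RowSplit k 1 (m - 1) X Y Z ∨
      (X (k + 3) = X (k + 2) ∧ 2 ≤ m ∧ RowSplit k 2 (m - 2) X Y Z) := by
  induction m generalizing X Y Z with
  | zero => omega
  | succ m ih =>
    obtain hs | ⟨hx, hz, hy, hx'⟩ := h.split_or hk (by omega) hT
    · exact Or.inl hs
    have h' := h.untwist hk hx hz hy hx'
    rw [show ((m + 1 : ℕ) : ℤ) - 1 = m by omega] at h' ⊢
    have hwX : X (k + 2) ≤ X (k + 3) := h.x_mono (by omega)
    have e1 : unitRow 0 (k + 3) = 1 := by simp [unitRow]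
    have e2 : unitRow (k + 1) (k + 3) = 1 := by simp [unitRow]
    have e3 : unitRow (k + 2) (k + 3) = 1 := by simp [unitRow]
    have e4 : unitRow 0 (k + 2) = 1 := by simp [unitRow]
    have e5 : unitRow (k + 1) (k + 2) = 1 := by simp [unitRow]
    have e6 : unitRow (k + 2) (k + 2) = 0 := by simp [unitRow]
    have e7 : unitRow k (k + 2) = 1 := by simp [unitRow]
    set X' := X - unitRow 0 - unitRow (k + 1) + unitRow (k + 2) with hX'
    have hX3 : X' (k + 3) = X (k + 3) - 1 := by
      simp only [hX', Pi.add_apply, Pi.sub_apply]; omega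
    have hX2 : X' (k + 2) = X (k + 2) - 2 := by
      simp only [hX', Pi.add_apply, Pi.sub_apply]; omega
    have hY2 : (Y - unitRow k) (k + 2) = Y (k + 2) - 1 := by
      simp only [Pi.sub_apply]; omega
    have hX'0 : 0 ≤ X' (k + 2) := h'.x_zero ▸ h'.x_mono (by omega)
    have hY'0 : 0 ≤ (Y - unitRow k) (k + 2) := h'.y_zero ▸ h'.y_mono (by omega)
    obtain ⟨U, V, W, hO, hσ⟩ | hs := ih (by omega) h' (by omega)
    · have hWO : W k ≤ W (k + 1) := hO.z_mono (by omega)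
      have hWσ : (Z - W) k ≤ (Z - W) (k + 1) := hσ.z_mono (by omega)
      have hUO : U (k + 2) ≤ U (k + 3) := hO.x_mono (by omega)
      have hUσ : (X' - U) (k + 2) ≤ (X' - U) (k + 3) := hσ.x_mono (by omega)
      have hU0 : 0 ≤ U (k + 2) := hO.x_zero ▸ hO.x_mono (by omega)
      simp only [Pi.sub_apply] at hWσ hUσ
      rcases hUσ.eq_or_lt with hwσ | hwσ
      · rcases hwX.eq_or_lt with hw | hw
        · right
          refine ⟨hw.symm, by omega, _, _, _, hO.twist hk (by omega) (by omega), ?_⟩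
          convert hσ using 1
          · push_cast; ring
          · rw [hX']; ring
          · ring
        · left
          refine ⟨_, _, _, rowSystem_unit_x_y hk, ?_⟩
          convert (hO.shift_top hk (by omega) (by omega)).add hσ using 1
          · ring
          · rw [hX']; ring
          · ring
          · ring
      · left
        refine ⟨U, V, W, hO, ?_⟩
        convert hσ.twist hk (by simp only [Pi.sub_apply]; omega)
          (by simp only [Pi.sub_apply]; omega) using 1
        · ring
        · rw [hX']; ring
        · ring
    · omega

theorem RowSystem.change_top (h : RowSystem k m X Y Z) (c : ℤ) (hc : X (k + 2) ≤ X (k + 3) + c)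
    (hT : X (k + 3) + c + Y (k + 2) ≤ 2 * m) :
    RowSystem k m (X + c • unitRow (k + 2)) Y Z := by
  have he t (ht : t ≤ k + 2) : (X + c • unitRow (k + 2)) t = X t := by
    simp [unitRow]
    omega
  refine ⟨by rw [he 0 (by omega), h.x_zero], h.y_zero, h.z_zero,
    monotone_nat_of_le_succ fun t => ?_, h.y_mono, h.z_mono, fun a b h1 h2 => ?_,
    fun a b h1 h2 h3 => ?_, fun a b h1 h2 h3 => ?_, ?_⟩
  · have hX : X t ≤ X (t + 1) := h.x_mono (by omega)
    simp only [Pi.add_apply, Pi.smul_apply, smul_eq_mul]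
    rcases unitRow_step (k + 2) t with ⟨rfl, h0, h1⟩ | ⟨h0, h1⟩
    · rw [h0, h1]
      simp only [Nat.add_assoc, Nat.reduceAdd]
      omega
    · rw [h1]
      omega
  · rw [he _ (by omega)]
    exact h.short a b h1 h2
  · rw [he _ (by omega), he _ (by omega)]
    exact h.long a b h1 h2 h3
  · rw [he _ (by omega)]
    exact h.double a b h1 h2 h3
  · simp [unitRow]
    omega

theorem RowSplit.lower_top {l d : ℤ} (h : RowSplit k l m (X + d • unitRow (k + 2)) Y Z)
    (hd : 0 ≤ d) (hX : X (k + 2) ≤ X (k + 3)) : RowSplit k l m X Y Z := by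
  obtain ⟨U, V, W, hO, hσ⟩ := h
  set A := X + d • unitRow (k + 2) with hA
  have hA2 : A (k + 2) = X (k + 2) := by simp [hA, unitRow]
  have hA3 : A (k + 3) = X (k + 3) + d := by simp [hA, unitRow]
  have hU : U (k + 2) ≤ U (k + 3) := hO.x_mono (by omega)
  have hS : (A - U) (k + 2) ≤ (A - U) (k + 3) := hσ.x_mono (by omega)
  have hTO := hO.top
  have hTσ := hσ.top
  simp only [Pi.sub_apply] at hS hTσ
  obtain ⟨c, hc0, hcd, hcU, hcS⟩ : ∃ c : ℤ, 0 ≤ c ∧ c ≤ d ∧ U (k + 2) ≤ U (k + 3) - c ∧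
      A (k + 2) - U (k + 2) ≤ A (k + 3) - U (k + 3) - (d - c) :=
    ⟨min d (U (k + 3) - U (k + 2)), by omega, by omega, by omega, by omega⟩
  refine ⟨_, _, _, hO.change_top (-c) (by omega) (by omega), ?_⟩
  convert hσ.change_top (-(d - c)) (by simp only [Pi.sub_apply]; omega)
    (by simp only [Pi.sub_apply]; omega) using 1
  rw [hA]
  module

theorem RowSystem.split_one_or_two (hk : 1 ≤ k) (m : ℕ) (hm : 1 ≤ m) (h : RowSystem k m X Y Z) :
    RowSplit k 1 (m - 1) X Y Z ∨ (2 ≤ m ∧ RowSplit k 2 (m - 2) X Y Z) := by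
  have hT := h.top
  have hX : X (k + 2) ≤ X (k + 3) := h.x_mono (by omega)
  have h' := h.change_top (2 * m - X (k + 3) - Y (k + 2)) (by omega) (by omega)
  obtain hs | ⟨-, h2, hs⟩ := h'.split_tight hk m hm (by simp [unitRow]; ring)
  · exact Or.inl (hs.lower_top (by omega) hX)
  · exact Or.inr ⟨h2, hs.lower_top (by omega) hX⟩

theorem RowSystem.split_two (hk : 1 ≤ k) (m : ℕ) (hm : 2 ≤ m) (h : RowSystem k m X Y Z) :
    RowSplit k 2 (m - 2) X Y Z := by
  induction m, hm using Nat.le_induction generalizing X Y Z with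
  | base =>
    refine ⟨X, Y, Z, h, ?_⟩
    simp only [sub_self]
    exact ⟨rfl, rfl, rfl, monotone_const, monotone_const, monotone_const, by simp, by simp,
      by simp, by simp⟩
  | succ m hm ih =>
    obtain ⟨U, V, W, hO, hσ⟩ | ⟨-, hs⟩ := h.split_one_or_two hk _ (by omega)
    · obtain ⟨P, Q, R, hP, hτ⟩ := ih (by convert hσ using 1; push_cast; ring)
      refine ⟨P, Q, R, hP, ?_⟩
      convert hO.add hτ using 1
      · push_cast; ring
      · ring
      · ring
      · ring
    · exact hs

end Rows

/-- `L` is a path from `u` to `v` made of root steps. -/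
def IsRootPath (L : List (ℕ × ℕ)) (u v : ℕ × ℕ) : Prop :=
  L.IsChain RootStep ∧ L.head? = some u ∧ L.getLast? = some v

/-- The roots `α_{p,q}, …, α_{p,c}`. -/
def rowSeg (p q c : ℕ) : List (ℕ × ℕ) := (List.range' q (c + 1 - q)).map (Prod.mk p)

theorem rowSeg_cons {p q c : ℕ} (h : q ≤ c) : rowSeg p q c = (p, q) :: rowSeg p (q + 1) c := by
  rw [rowSeg, rowSeg, show c + 1 - q = c + 1 - (q + 1) + 1 by omega, List.range'_succ,
    List.map_cons]

theorem rowSeg_self (p q : ℕ) : rowSeg p q q = [(p, q)] := by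
  simp [rowSeg]

theorem mem_rowSeg {p q c : ℕ} {x : ℕ × ℕ} : x ∈ rowSeg p q c ↔ x.1 = p ∧ q ≤ x.2 ∧ x.2 ≤ c := by
  obtain ⟨a, b⟩ := x
  simp only [rowSeg, List.mem_map, List.mem_range'_1, Prod.mk.injEq]
  constructor
  · rintro ⟨t, ht, rfl, rfl⟩
    omega
  · rintro ⟨rfl, h⟩
    exact ⟨b, by omega, rfl, rfl⟩

theorem isRootPath_rowSeg {p q c : ℕ} (h : q ≤ c) : IsRootPath (rowSeg p q c) (p, q) (p, c) := by
  refine ⟨?_, ?_, ?_⟩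
  · rw [rowSeg, List.isChain_map]
    exact (List.isChain_range' q _ 1).imp fun a b hab => Or.inl ⟨rfl, hab⟩
  · rw [rowSeg_cons h, List.head?_cons]
  · rw [rowSeg, List.getLast?_map, List.getLast?_range', if_neg (by omega), Option.map_some]
    congr 2
    omega

theorem IsRootPath.append {L L' : List (ℕ × ℕ)} {u v u' v' : ℕ × ℕ} (h : IsRootPath L u v)
    (h' : IsRootPath L' u' v') (hs : RootStep v u') : IsRootPath (L ++ L') u v' := by
  refine ⟨?_, ?_, ?_⟩
  · rw [List.isChain_append]
    refine ⟨h.1, h'.1, ?_⟩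
    rw [h.2.2, h'.2.1]
    simpa using hs
  · rw [List.head?_append, h.2.1, Option.some_or]
  · rw [List.getLast?_append, h'.2.2, Option.some_or]

theorem IsRootPath.ne_nil {L : List (ℕ × ℕ)} {u v : ℕ × ℕ} (h : IsRootPath L u v) : L ≠ [] := by
  rintro rfl
  simpa using h.2.1

theorem IsRootPath.cons_cases {L : List (ℕ × ℕ)} {u v x : ℕ × ℕ} (h : IsRootPath (x :: L) u v) :
    x = u ∧ (L = [] ∧ u = v ∨ ∃ w, RootStep u w ∧ IsRootPath L w v) := by
  obtain ⟨hc, hh, hl⟩ := h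
  obtain rfl : x = u := by simpa using hh
  refine ⟨rfl, ?_⟩
  rcases L with _ | ⟨w, L⟩
  · exact Or.inl ⟨rfl, by simpa using hl⟩
  · rw [List.isChain_cons_cons] at hc
    exact Or.inr ⟨w, hc.1, hc.2, rfl, by simpa using hl⟩

theorem IsRootPath.le {L : List (ℕ × ℕ)} {u v : ℕ × ℕ} (h : IsRootPath L u v) :
    u.1 ≤ v.1 ∧ u.2 ≤ v.2 := by
  induction L generalizing u with
  | nil => exact absurd rfl h.ne_nil
  | cons x L ih =>
    obtain ⟨rfl, ⟨-, rfl⟩ | ⟨w, hs, hw⟩⟩ := h.cons_cases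
    · exact ⟨le_rfl, le_rfl⟩
    · have := ih hw
      unfold RootStep at hs
      omega

theorem IsRootPath.eq_rowSeg {L : List (ℕ × ℕ)} {p q e : ℕ} (h : IsRootPath L (p, q) (p, e)) :
    L = rowSeg p q e := by
  induction L generalizing q with
  | nil => exact absurd rfl h.ne_nil
  | cons x L ih =>
    have hle : q ≤ e := h.le.2
    obtain ⟨rfl, ⟨rfl, he⟩ | ⟨⟨a, b⟩, hs, hw⟩⟩ := h.cons_cases
    · obtain rfl : q = e := by simpa using he
      exact (rowSeg_self p q).symm
    · have hle' := hw.le.1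
      simp only [RootStep] at hs hle'
      obtain ⟨rfl, rfl⟩ : a = p ∧ b = q + 1 := by omega
      rw [rowSeg_cons hle, ← ih hw]

theorem IsRootPath.exists_split {L : List (ℕ × ℕ)} {p q r e : ℕ}
    (h : IsRootPath L (p, q) (r, e)) (hpr : p < r) :
    ∃ c L', q ≤ c ∧ L = rowSeg p q c ++ L' ∧ IsRootPath L' (p + 1, c) (r, e) := by
  induction L generalizing q with
  | nil => exact absurd rfl h.ne_nil
  | cons x L ih =>
    obtain ⟨rfl, ⟨rfl, he⟩ | ⟨⟨a, b⟩, hs, hw⟩⟩ := h.cons_cases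
    · simp only [Prod.mk.injEq] at he
      omega
    · simp only [RootStep] at hs
      obtain ⟨rfl, rfl⟩ | ⟨rfl, rfl⟩ := hs
      · obtain ⟨c, L', hc, rfl, hL'⟩ := ih hw
        exact ⟨c, L', by omega, by rw [rowSeg_cons (by omega : q ≤ c), List.cons_append], hL'⟩
      · exact ⟨b, L, le_rfl, by rw [rowSeg_self, List.singleton_append], hw⟩

/-- The partial sums of the `p`-th row of `s`, starting from the third column. -/
def rowSum (s : ℕ × ℕ → ℕ) (p t : ℕ) : ℤ := ∑ i ∈ Finset.range t, (s (p, 3 + i) : ℤ)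

theorem rowSum_zero (s : ℕ × ℕ → ℕ) (p : ℕ) : rowSum s p 0 = 0 := rfl

theorem rowSum_succ (s : ℕ × ℕ → ℕ) (p t : ℕ) :
    rowSum s p (t + 1) = rowSum s p t + s (p, 3 + t) := Finset.sum_range_succ _ _

theorem rowSum_mono (s : ℕ × ℕ → ℕ) (p : ℕ) : Monotone (rowSum s p) :=
  monotone_nat_of_le_succ fun t => by
    rw [rowSum_succ]
    omega

theorem sum_rowSeg (s : ℕ × ℕ → ℕ) (p a : ℕ) {b : ℕ} (hab : a ≤ b) :
    ((((rowSeg p (3 + a) (3 + b)).map s).sum : ℕ) : ℤ) = rowSum s p (b + 1) - rowSum s p a := by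
  obtain ⟨d, rfl⟩ := Nat.exists_eq_add_of_le hab
  induction d generalizing a with
  | zero =>
    rw [Nat.add_zero, rowSeg_self, rowSum_succ]
    simp
  | succ d ih =>
    have h := ih (a + 1) (by omega)
    rw [show a + 1 + d = a + (d + 1) by omega, rowSum_succ s p a, ← Nat.add_assoc 3 a 1] at h
    rw [rowSeg_cons (by omega), List.map_cons, List.sum_cons, Nat.cast_add, h]
    ring

theorem sum_rowSeg_three (s : ℕ × ℕ → ℕ) (p b : ℕ) :
    ((((rowSeg p 3 (3 + b)).map s).sum : ℕ) : ℤ) = rowSum s p (b + 1) := by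
  rw [← sub_zero (rowSum s p (b + 1)), ← rowSum_zero s p, ← sum_rowSeg s p 0 (Nat.zero_le b)]

theorem short_of_mem_SD {n k m : ℕ} {s : ℕ × ℕ → ℕ} (hn : 2 * n = k + 6) (hs : s ∈ SD n 3 m)
    {a b : ℕ} (hab : a ≤ b) (hb : b < k) :
    rowSum s 1 (a + 1) + rowSum s 2 (b + 1) - rowSum s 2 a + rowSum s 3 k - rowSum s 3 b ≤ m := by
  obtain ⟨k, rfl⟩ : ∃ l, k = l + 1 := ⟨k - 1, by omega⟩
  have hp := (isRootPath_rowSeg (p := 1) (show 3 ≤ 3 + a by omega)).append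
    ((isRootPath_rowSeg (p := 2) (show 3 + a ≤ 3 + b by omega)).append
      (isRootPath_rowSeg (p := 3) (show 3 + b ≤ 3 + k by omega)) (Or.inr ⟨rfl, rfl⟩))
    (Or.inr ⟨rfl, rfl⟩)
  have h := hs.2.1 _ ⟨hp.ne_nil, hp.1, ?_, Or.inl ⟨hp.2.1, ?_⟩⟩
  · rw [← Nat.cast_le (α := ℤ)] at h
    simp only [List.map_append, List.sum_append, Nat.cast_add] at h
    rw [sum_rowSeg_three, sum_rowSeg s 2 a hab, sum_rowSeg s 3 b (by omega)] at h
    omega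
  · simp only [List.mem_append, mem_rowSeg, inR]
    intros
    omega
  · rw [hp.2.2, show 3 + k = 2 * n - 3 - 1 by omega]

theorem long_of_mem_SD {n k m : ℕ} {s : ℕ × ℕ → ℕ} (hn : 2 * n = k + 6) (hs : s ∈ SD n 3 m)
    {a b : ℕ} (ha : 1 ≤ a) (hab : a ≤ b) (hb : b ≤ k) :
    rowSum s 1 (a + 1) - rowSum s 1 1 + rowSum s 2 (b + 1) - rowSum s 2 a + rowSum s 3 (k + 1)
      - rowSum s 3 b ≤ m := by
  have hp := (isRootPath_rowSeg (p := 1) (show 3 + 1 ≤ 3 + a by omega)).append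
    ((isRootPath_rowSeg (p := 2) (show 3 + a ≤ 3 + b by omega)).append
      (isRootPath_rowSeg (p := 3) (show 3 + b ≤ 3 + k by omega)) (Or.inr ⟨rfl, rfl⟩))
    (Or.inr ⟨rfl, rfl⟩)
  have h := hs.2.1 _ ⟨hp.ne_nil, hp.1, ?_, Or.inr ⟨hp.2.1, ?_⟩⟩
  · rw [← Nat.cast_le (α := ℤ)] at h
    simp only [List.map_append, List.sum_append, Nat.cast_add] at h
    rw [sum_rowSeg s 1 1 ha, sum_rowSeg s 2 a hab, sum_rowSeg s 3 b hb] at h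
    omega
  · simp only [List.mem_append, mem_rowSeg, inR]
    intros
    omega
  · rw [hp.2.2, show 3 + k = 2 * n - 3 by omega]

theorem double_of_mem_SD {n k m : ℕ} {s : ℕ × ℕ → ℕ} (hn : 2 * n = k + 6) (hs : s ∈ SD n 3 m)
    {a b : ℕ} (hab : b < a) (ha : a ≤ k + 1) (hb : b ≤ k) :
    rowSum s 1 (a + 1) + rowSum s 2 (k + 2) - rowSum s 2 a + rowSum s 2 (b + 1)
      + rowSum s 3 (k + 1) - rowSum s 3 b ≤ (m * cB n 3 : ℕ) := by
  have hp := (isRootPath_rowSeg (p := 1) (show 3 ≤ 3 + a by omega)).append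
    (isRootPath_rowSeg (p := 2) (show 3 + a ≤ 3 + (k + 1) by omega)) (Or.inr ⟨rfl, rfl⟩)
  have hq := (isRootPath_rowSeg (p := 2) (show 3 ≤ 3 + b by omega)).append
    (isRootPath_rowSeg (p := 3) (show 3 + b ≤ 3 + k by omega)) (Or.inr ⟨rfl, rfl⟩)
  have h := hs.2.2 _ _ ⟨2, by omega, by omega, hp.ne_nil, hq.ne_nil, hp.1, hq.1, ?_, ?_, hp.2.1,
    hq.2.1, ?_, ?_, ?_⟩
  · rw [← Nat.cast_le (α := ℤ)] at h
    simp only [List.map_append, List.sum_append, Nat.cast_add] at h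
    rw [sum_rowSeg_three, sum_rowSeg_three, sum_rowSeg s 2 a ha, sum_rowSeg s 3 b hb] at h
    linarith
  · simp only [List.mem_append, mem_rowSeg, inR]
    intros
    omega
  · simp only [List.mem_append, mem_rowSeg, inR]
    intros
    omega
  · rw [hp.2.2, show 3 + (k + 1) = 2 * n - 2 by omega]
  · rw [hq.2.2, show 3 + k = 2 * n - 2 - 1 by omega]
  · simp only [List.mem_append, mem_rowSeg]
    intros
    omega

theorem top_of_mem_SD {n k m : ℕ} {s : ℕ × ℕ → ℕ} (hn : 2 * n = k + 6) (hs : s ∈ SD n 3 m) :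
    rowSum s 1 (k + 3) + rowSum s 2 (k + 2) ≤ (m * cB n 3 : ℕ) := by
  have hp := isRootPath_rowSeg (p := 1) (show 3 ≤ 3 + (k + 2) by omega)
  have hq := isRootPath_rowSeg (p := 2) (show 3 ≤ 3 + (k + 1) by omega)
  have h := hs.2.2 _ _ ⟨1, by omega, by omega, hp.ne_nil, hq.ne_nil, hp.1, hq.1, ?_, ?_, hp.2.1,
    hq.2.1, ?_, ?_, ?_⟩
  · rw [← Nat.cast_le (α := ℤ)] at h
    simp only [List.map_append, List.sum_append, Nat.cast_add] at h
    rw [sum_rowSeg_three, sum_rowSeg_three] at h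
    exact h
  · simp only [mem_rowSeg, inR]
    intros
    omega
  · simp only [mem_rowSeg, inR]
    intros
    omega
  · rw [hp.2.2, show 3 + (k + 2) = 2 * n - 1 by omega]
  · rw [hq.2.2, show 3 + (k + 1) = 2 * n - 1 - 1 by omega]
  · simp only [mem_rowSeg]
    intros
    omega

theorem IsRootPath.exists_two_rows {L : List (ℕ × ℕ)} {p q e : ℕ}
    (h : IsRootPath L (p, 3 + q) (p + 1, 3 + e)) :
    ∃ c, q ≤ c ∧ c ≤ e ∧ L = rowSeg p (3 + q) (3 + c) ++ rowSeg (p + 1) (3 + c) (3 + e) := by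
  obtain ⟨c, L', hc, rfl, h'⟩ := h.exists_split (by omega)
  obtain ⟨c, rfl⟩ := Nat.exists_eq_add_of_le ((Nat.le_add_right 3 q).trans hc)
  have := h'.le.2
  exact ⟨c, by omega, by simpa using this, by rw [h'.eq_rowSeg]⟩

theorem IsRootPath.exists_three_rows {L : List (ℕ × ℕ)} {q e : ℕ}
    (h : IsRootPath L (1, 3 + q) (3, 3 + e)) :
    ∃ a b, q ≤ a ∧ a ≤ b ∧ b ≤ e ∧ L = rowSeg 1 (3 + q) (3 + a) ++
      (rowSeg 2 (3 + a) (3 + b) ++ rowSeg 3 (3 + b) (3 + e)) := by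
  obtain ⟨a, L', ha, rfl, h'⟩ := h.exists_split (by omega)
  obtain ⟨a, rfl⟩ := Nat.exists_eq_add_of_le ((Nat.le_add_right 3 q).trans ha)
  obtain ⟨b, hab, hb, rfl⟩ := h'.exists_two_rows
  exact ⟨a, b, by omega, hab, hb, rfl⟩

theorem mem_SD_of_bounds {n k m : ℕ} {s : ℕ × ℕ → ℕ} (hn : 2 * n = k + 6)
    (h0 : ∀ β, ¬ inR n 3 β → s β = 0)
    (hs : ∀ a b, a ≤ b → b < k → rowSum s 1 (a + 1) + rowSum s 2 (b + 1) - rowSum s 2 a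
      + rowSum s 3 k - rowSum s 3 b ≤ m)
    (hl : ∀ a b, 1 ≤ a → a ≤ b → b ≤ k → rowSum s 1 (a + 1) - rowSum s 1 1 + rowSum s 2 (b + 1)
      - rowSum s 2 a + rowSum s 3 (k + 1) - rowSum s 3 b ≤ m)
    (hd : ∀ a b, b < a → a ≤ k + 1 → b ≤ k → rowSum s 1 (a + 1) + rowSum s 2 (k + 2) - rowSum s 2 a
      + rowSum s 2 (b + 1) + rowSum s 3 (k + 1) - rowSum s 3 b ≤ (m * cB n 3 : ℕ))
    (ht : rowSum s 1 (k + 3) + rowSum s 2 (k + 2) ≤ (m * cB n 3 : ℕ)) :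
    s ∈ SD n 3 m := by
  refine ⟨h0, ?_, ?_⟩
  · rintro L ⟨-, hc, -, ⟨hh, hL⟩ | ⟨hh, hL⟩⟩
    · have hp : IsRootPath L (1, 3) (3, 2 * n - 3 - 1) := ⟨hc, hh, hL⟩
      have hle := hp.le.2
      obtain ⟨e, rfl⟩ : ∃ e, k = e + 1 := ⟨k - 1, by simp only at hle; omega⟩
      rw [show 2 * n - 3 - 1 = 3 + e by omega] at hp
      obtain ⟨a, b, -, hab, hb, rfl⟩ := IsRootPath.exists_three_rows (q := 0) hp
      rw [← Nat.cast_le (α := ℤ)]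
      simp only [List.map_append, List.sum_append, Nat.cast_add]
      rw [sum_rowSeg s 1 0 (by omega), sum_rowSeg s 2 a hab, sum_rowSeg s 3 b hb, rowSum_zero]
      linarith [hs a b hab (by omega)]
    · have hp : IsRootPath L (1, 3 + 1) (3, 2 * n - 3) := ⟨hc, hh, hL⟩
      rw [show 2 * n - 3 = 3 + k by omega] at hp
      obtain ⟨a, b, ha, hab, hb, rfl⟩ := hp.exists_three_rows
      rw [← Nat.cast_le (α := ℤ)]
      simp only [List.map_append, List.sum_append, Nat.cast_add]
      rw [sum_rowSeg s 1 1 ha, sum_rowSeg s 2 a hab, sum_rowSeg s 3 b hb]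
      linarith [hl a b ha hab (by omega)]
  · rintro L L' ⟨j, hj, hj', -, -, hc, hc', -, -, hh, hh', hL, hL', hdisj⟩
    obtain rfl | rfl : j = 1 ∨ j = 2 := by omega
    · have hp : IsRootPath L (1, 3) (1, 2 * n - 1) := ⟨hc, hh, hL⟩
      have hq : IsRootPath L' (2, 3) (2, 2 * n - 1 - 1) := ⟨hc', hh', hL'⟩
      rw [hp.eq_rowSeg, hq.eq_rowSeg, show 2 * n - 1 - 1 = 3 + (k + 1) by omega,
        show 2 * n - 1 = 3 + (k + 2) by omega]
      rw [← Nat.cast_le (α := ℤ)]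
      simp only [List.map_append, List.sum_append, Nat.cast_add]
      rw [sum_rowSeg_three, sum_rowSeg_three]
      exact ht
    · have hp : IsRootPath L (1, 3 + 0) (1 + 1, 2 * n - 2) := ⟨hc, hh, hL⟩
      have hq : IsRootPath L' (2, 3 + 0) (2 + 1, 2 * n - 2 - 1) := ⟨hc', hh', hL'⟩
      rw [show 2 * n - 2 - 1 = 3 + k by omega] at hq
      rw [show 2 * n - 2 = 3 + (k + 1) by omega] at hp
      obtain ⟨a, -, ha, rfl⟩ := hp.exists_two_rows
      obtain ⟨b, -, hb, rfl⟩ := hq.exists_two_rows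
      have hba : b < a := by
        by_contra hab
        refine hdisj (2, 3 + b) ⟨List.mem_append.2 (Or.inr (mem_rowSeg.2 ⟨rfl, ?_, ?_⟩)),
          List.mem_append.2 (Or.inl (mem_rowSeg.2 ⟨rfl, ?_, ?_⟩))⟩ <;> dsimp only <;> omega
      rw [← Nat.cast_le (α := ℤ)]
      simp only [List.map_append, List.sum_append, Nat.cast_add]
      rw [sum_rowSeg s 1 0 (by omega), sum_rowSeg s 2 0 (by omega), sum_rowSeg s (1 + 1) a ha,
        sum_rowSeg s (2 + 1) b hb, rowSum_zero, rowSum_zero]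
      have := hd a b hba ha hb
      linarith

theorem add_mem_SD {n i l m : ℕ} {s t : ℕ × ℕ → ℕ} (hs : s ∈ SD n i l) (ht : t ∈ SD n i m) :
    s + t ∈ SD n i (l + m) := by
  have hsum (L : List (ℕ × ℕ)) : (L.map (s + t)).sum = (L.map s).sum + (L.map t).sum :=
    List.sum_map_add
  refine ⟨fun β hβ => ?_, fun L hL => ?_, fun L L' hL => ?_⟩
  · rw [Pi.add_apply, hs.1 β hβ, ht.1 β hβ]
  · rw [hsum]
    exact add_le_add (hs.2.1 L hL) (ht.2.1 L hL)
  · rw [hsum, add_mul]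
    exact add_le_add (hs.2.2 L L' hL) (ht.2.2 L L' hL)

theorem rowSum_sub {s t : ℕ × ℕ → ℕ} (h : t ≤ s) (p : ℕ) :
    rowSum (s - t) p = rowSum s p - rowSum t p := by
  funext a
  rw [Pi.sub_apply, rowSum, rowSum, rowSum, ← Finset.sum_sub_distrib]
  exact Finset.sum_congr rfl fun i _ => Nat.cast_sub (h _)

/-- The multi-exponent with given partial row sums. -/
def ofRows (U V W : ℕ → ℤ) (β : ℕ × ℕ) : ℕ :=
  if β.1 = 1 then (U (β.2 - 2) - U (β.2 - 3)).toNat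
  else if β.1 = 2 then (V (β.2 - 2) - V (β.2 - 3)).toNat
  else if β.1 = 3 then (W (β.2 - 2) - W (β.2 - 3)).toNat
  else 0

theorem rowSum_eq_of_entries {s : ℕ × ℕ → ℕ} {p : ℕ} {U : ℕ → ℤ} (h0 : U 0 = 0) (hU : Monotone U)
    (hs : ∀ i, s (p, 3 + i) = (U (3 + i - 2) - U (3 + i - 3)).toNat) : rowSum s p = U := by
  funext t
  induction t with
  | zero => rw [h0, rowSum_zero]
  | succ t ih =>
    rw [rowSum_succ, ih, hs, show 3 + t - 2 = t + 1 by omega, show 3 + t - 3 = t by omega]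
    have := hU (Nat.le_add_right t 1)
    omega

theorem cast_mul_cB {n k m : ℕ} (hn : 2 * n = k + 6) (hk : 1 ≤ k) :
    ((m * cB n 3 : ℕ) : ℤ) = 2 * m := by
  rw [cB, if_neg (by omega)]
  push_cast
  ring

theorem rowSystem_of_mem_SD {n k m : ℕ} {s : ℕ × ℕ → ℕ} (hn : 2 * n = k + 6) (hk : 1 ≤ k)
    (hs : s ∈ SD n 3 m) : RowSystem k m (rowSum s 1) (rowSum s 2) (rowSum s 3) := by
  have hc := cast_mul_cB (m := m) hn hk
  exact ⟨rowSum_zero s 1, rowSum_zero s 2, rowSum_zero s 3, rowSum_mono s 1, rowSum_mono s 2,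
    rowSum_mono s 3, fun _ _ => short_of_mem_SD hn hs, fun _ _ => long_of_mem_SD hn hs,
    fun _ _ h1 h2 h3 => (double_of_mem_SD hn hs h1 h2 h3).trans hc.le,
    (top_of_mem_SD hn hs).trans hc.le⟩

theorem mem_SD_of_rowSystem {n k m : ℕ} {s : ℕ × ℕ → ℕ} (hn : 2 * n = k + 6) (hk : 1 ≤ k)
    (h0 : ∀ β, ¬ inR n 3 β → s β = 0)
    (h : RowSystem k m (rowSum s 1) (rowSum s 2) (rowSum s 3)) : s ∈ SD n 3 m := by
  have hc := cast_mul_cB (m := m) hn hk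
  exact mem_SD_of_bounds hn h0 h.short h.long
    (fun a b h1 h2 h3 => (h.double a b h1 h2 h3).trans hc.ge) (h.top.trans hc.ge)

theorem toNat_sub_le_entry (s : ℕ × ℕ → ℕ) {p : ℕ} {U : ℕ → ℤ} (hU : Monotone (rowSum s p - U))
    (q : ℕ) : (U (q - 2) - U (q - 3)).toNat ≤ s (p, q) := by
  obtain hq | ⟨t, rfl⟩ : q < 3 ∨ ∃ t, q = 3 + t := by
    by_cases hq : q < 3
    · exact Or.inl hq
    · exact Or.inr ⟨q - 3, by omega⟩
  · rw [show q - 2 = q - 3 by omega, sub_self]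
    exact Nat.zero_le _
  · rw [show 3 + t - 2 = t + 1 by omega, show 3 + t - 3 = t by omega]
    have := hU (Nat.le_succ t)
    simp only [Pi.sub_apply, Nat.succ_eq_add_one, rowSum_succ] at this
    omega

theorem exists_split_of_lt {n m : ℕ} (hn : 3 < n) (hm : 2 ≤ m) {s : ℕ × ℕ → ℕ}
    (hs : s ∈ SD n 3 m) : ∃ t ≤ s, s - t ∈ SD n 3 (m - 2) ∧ t ∈ SD n 3 2 := by
  obtain ⟨k, hk⟩ : ∃ k, 2 * n = k + 6 := ⟨2 * n - 6, by omega⟩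
  have hk1 : 1 ≤ k := by omega
  obtain ⟨U, V, W, h2, hm2⟩ := (rowSystem_of_mem_SD hk hk1 hs).split_two hk1 m hm
  have hU : rowSum (ofRows U V W) 1 = U :=
    rowSum_eq_of_entries h2.x_zero h2.x_mono fun _ => rfl
  have hV : rowSum (ofRows U V W) 2 = V :=
    rowSum_eq_of_entries h2.y_zero h2.y_mono fun _ => rfl
  have hW : rowSum (ofRows U V W) 3 = W :=
    rowSum_eq_of_entries h2.z_zero h2.z_mono fun _ => rfl
  have hle : ofRows U V W ≤ s := by
    rintro ⟨p, q⟩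
    rw [ofRows]
    split_ifs with h1 h2 h3
    · obtain rfl : p = 1 := h1
      exact toNat_sub_le_entry s hm2.x_mono q
    · obtain rfl : p = 2 := h2
      exact toNat_sub_le_entry s hm2.y_mono q
    · obtain rfl : p = 3 := h3
      exact toNat_sub_le_entry s hm2.z_mono q
    · exact Nat.zero_le _
  refine ⟨ofRows U V W, hle, mem_SD_of_rowSystem hk hk1 (fun β hβ => ?_) ?_,
    mem_SD_of_rowSystem hk hk1 (fun β hβ => ?_) ?_⟩
  · rw [Pi.sub_apply, hs.1 β hβ, Nat.zero_sub]
  · rw [rowSum_sub hle, rowSum_sub hle, rowSum_sub hle, hU, hV, hW, Nat.cast_sub hm]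
    exact hm2
  · exact Nat.le_zero.1 ((hle β).trans (hs.1 β hβ).le)
  · rw [hU, hV, hW]
    exact h2

theorem mem_SD_three_iff {m : ℕ} {s : ℕ × ℕ → ℕ} :
    s ∈ SD 3 3 m ↔ (∀ β, ¬ inR 3 3 β → s β = 0) ∧
      s (1, 3) + s (1, 4) + s (2, 3) + s (2, 4) + s (3, 3) ≤ m ∧
      s (1, 3) + s (1, 4) + s (1, 5) + s (2, 3) + s (2, 4) ≤ m := by
  have hc : m * cB 3 3 = m := by simp [cB]
  constructor
  · intro hs
    have hd := double_of_mem_SD (k := 0) rfl hs (a := 1) (b := 0) one_pos le_rfl le_rfl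
    have ht := top_of_mem_SD (k := 0) rfl hs
    simp only [hc, rowSum_succ, rowSum_zero, Nat.zero_add, Nat.add_zero, Nat.reduceAdd] at hd ht
    exact ⟨hs.1, by omega, by omega⟩
  · rintro ⟨h0, hd, ht⟩
    refine mem_SD_of_bounds (k := 0) rfl h0 (fun a b h1 h2 => ?_) (fun a b h1 h2 h3 => ?_)
      (fun a b h1 h2 h3 => ?_) ?_
    · omega
    · omega
    · obtain rfl : a = 1 := by omega
      obtain rfl : b = 0 := by omega
      simp only [hc, rowSum_succ, rowSum_zero, Nat.zero_add, Nat.add_zero, Nat.reduceAdd]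
      omega
    · simp only [hc, rowSum_succ, rowSum_zero, Nat.zero_add, Nat.add_zero, Nat.reduceAdd]
      omega

theorem exists_split_three {m : ℕ} (hm : 2 ≤ m) {s : ℕ × ℕ → ℕ}
    (hs : s ∈ SD 3 3 m) : ∃ t ≤ s, s - t ∈ SD 3 3 (m - 2) ∧ t ∈ SD 3 3 2 := by
  obtain ⟨h0, hd, ht⟩ := mem_SD_three_iff.1 hs
  obtain ⟨a, b, c, d, ha, hb, hc, hd', hmin⟩ : ∃ a b c d, a ≤ s (1, 3) ∧ b ≤ s (1, 4) ∧
      c ≤ s (2, 3) ∧ d ≤ s (2, 4) ∧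
      a + b + c + d = min 2 (s (1, 3) + s (1, 4) + s (2, 3) + s (2, 4)) :=
    ⟨min (s (1, 3)) 2, min (s (1, 4)) (2 - min (s (1, 3)) 2),
      min (s (2, 3)) (2 - (s (1, 3) + s (1, 4))),
      min (s (2, 4)) (2 - (s (1, 3) + s (1, 4) + s (2, 3))), by omega, by omega, by omega,
      by omega, by omega⟩
  let t : ℕ × ℕ → ℕ := fun β =>
    if β = (1, 3) then a else if β = (1, 4) then b else if β = (2, 3) then c
    else if β = (2, 4) then d else if β = (1, 5) then min (s (1, 5)) (2 - (a + b + c + d))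
    else if β = (3, 3) then min (s (3, 3)) (2 - (a + b + c + d)) else 0
  have hle : t ≤ s := by
    intro β
    simp only [t]
    split_ifs with h1 h2 h3 h4 h5 h6 <;> subst_vars <;> omega
  have h13 : t (1, 3) = a := rfl
  have h14 : t (1, 4) = b := rfl
  have h23 : t (2, 3) = c := rfl
  have h24 : t (2, 4) = d := rfl
  have h15 : t (1, 5) = min (s (1, 5)) (2 - (a + b + c + d)) := rfl
  have h33 : t (3, 3) = min (s (3, 3)) (2 - (a + b + c + d)) := rfl
  clear_value t
  refine ⟨t, hle, mem_SD_three_iff.2 ⟨fun β hβ => ?_, ?_, ?_⟩,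
    mem_SD_three_iff.2 ⟨fun β hβ => ?_, ?_, ?_⟩⟩
  · rw [Pi.sub_apply, h0 β hβ, Nat.zero_sub]
  · simp only [Pi.sub_apply]
    omega
  · simp only [Pi.sub_apply]
    omega
  · exact Nat.le_zero.1 ((hle β).trans (h0 β hβ).le)
  · omega
  · omega

/-- for `i = 3` and any `n ≥ 3`,
`S(D, m·ω₃) = S(D, (m-2)·ω₃) + S(D, 2·ω₃)` for every `m ≥ 2`. -/
theorem SD_omega3_minkowski (n : ℕ) (hn : 3 ≤ n) (m : ℕ) (hm : 2 ≤ m) :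
    SD n 3 m = SD n 3 (m - 2) + SD n 3 2 := by
  ext s
  rw [Set.mem_add]
  constructor
  · intro hs
    obtain ⟨t, hts, hst, ht⟩ : ∃ t ≤ s, s - t ∈ SD n 3 (m - 2) ∧ t ∈ SD n 3 2 := by
      obtain rfl | hn := hn.eq_or_lt
      · exact exists_split_three hm hs
      · exact exists_split_of_lt hn hm hs
    exact ⟨s - t, hst, t, ht, tsub_add_cancel_of_le hts⟩
  · rintro ⟨s, hs, t, ht, rfl⟩
    have := add_mem_SD hs ht
    rwa [Nat.sub_add_cancel hm] at this
end

section
/- Let n = 4 and i = 4. Then for every integer m >= 2, S(D, m*omega_4) = S(D, (m-2)*omega_4) + S(D, 2*omega_4). -/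
open scoped Pointwise

/-- All sequences of at most `k + 1` roots that start at `x` and follow the step condition. -/
def pathsFrom : ℕ → ℕ × ℕ → List (List (ℕ × ℕ))
  | 0, x => [[x]]
  | k + 1, x =>
    [x] :: (pathsFrom k (x.1, x.2 + 1) ++ pathsFrom k (x.1 + 1, x.2)).map (x :: ·)

instance : DecidableRel RootStep := fun a b => by unfold RootStep; infer_instance

instance (n i : ℕ) : DecidablePred (inR n i) := fun a => by unfold inR; infer_instance

lemma mem_pathsFrom (n i k : ℕ) (x : ℕ × ℕ) (L : List (ℕ × ℕ)) (hchain : L.IsChain RootStep)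
    (hR : ∀ y ∈ L, inR n i y) (hhead : L.head? = some x) (hk : 2 * n ≤ x.1 + x.2 + k) :
    L ∈ pathsFrom k x := by
  induction k generalizing x L with
  | zero =>
    match L, hhead with
    | [_], rfl => simp [pathsFrom]
    | x :: y :: L, rfl =>
      have hstep := (List.isChain_cons_cons.1 hchain).1
      have hy := hR y (by simp)
      unfold RootStep at hstep
      unfold inR at hy
      omega
  | succ k ih =>
    match L, hhead with
    | [_], rfl => simp [pathsFrom]
    | (p, q) :: (p', q') :: L, rfl =>
      obtain ⟨hstep, hchain'⟩ := List.isChain_cons_cons.1 hchain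
      have hR' : ∀ y ∈ (p', q') :: L, inR n i y := fun y hy => hR y (List.mem_cons_of_mem _ hy)
      simp only [pathsFrom, List.mem_cons, List.mem_map, List.mem_append]
      refine Or.inr ⟨_, ?_, rfl⟩
      rcases hstep with ⟨h1, h2⟩ | ⟨h1, h2⟩ <;> simp only at h1 h2 hk <;> subst h1 h2
      · exact Or.inl (ih _ _ hchain' hR' rfl (by simp only; omega))
      · exact Or.inr (ih _ _ hchain' hR' rfl (by simp only; omega))

/-- The double Dyck paths for `n = i = 4`. -/
def doublePaths : List (List (ℕ × ℕ) × List (ℕ × ℕ)) :=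
  [([(1, 4), (1, 5), (1, 6), (1, 7)], [(2, 4), (2, 5), (2, 6)]),
   ([(1, 4), (1, 5), (1, 6), (2, 6)], [(2, 4), (2, 5), (3, 5)]),
   ([(1, 4), (1, 5), (1, 6), (2, 6)], [(2, 4), (3, 4), (3, 5)]),
   ([(1, 4), (1, 5), (2, 5), (2, 6)], [(2, 4), (3, 4), (3, 5)]),
   ([(1, 4), (1, 5), (2, 5), (3, 5)], [(2, 4), (3, 4), (4, 4)])]

lemma not_isType1 (L : List (ℕ × ℕ)) : ¬ IsType1 4 4 L := by
  rintro ⟨-, hchain, hR, ⟨-, hl⟩ | ⟨hh, hl⟩⟩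
  · have := hR _ (List.mem_of_getLast? hl)
    simp [inR] at this
  · have hmem := mem_pathsFrom 4 4 2 _ L hchain hR hh (by simp)
    have hnone : ∀ L ∈ pathsFrom 2 (1, 5), L.getLast? ≠ some (4, 4) := by decide
    exact hnone L hmem hl

set_option synthInstance.maxSize 1000 in
set_option synthInstance.maxHeartbeats 200000 in
lemma isType2_iff (L1 L2 : List (ℕ × ℕ)) : IsType2 4 4 L1 L2 ↔ (L1, L2) ∈ doublePaths := by
  constructor
  · rintro ⟨j, hj1, hj4, -, -, hc1, hc2, hR1, hR2, hh1, hh2, hl1, hl2, hdisj⟩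
    have hmem1 := mem_pathsFrom 4 4 3 _ L1 hc1 hR1 hh1 (by simp)
    have hmem2 := mem_pathsFrom 4 4 2 _ L2 hc2 hR2 hh2 (by simp)
    have hall : ∀ L1 ∈ pathsFrom 3 (1, 4), ∀ L2 ∈ pathsFrom 2 (2, 4), ∀ j < 4,
        (1 ≤ j ∧ L1.getLast? = some (j, 2 * 4 - j) ∧ L2.getLast? = some (j + 1, 2 * 4 - j - 1) ∧
        (∀ x ∈ L1, inR 4 4 x) ∧ (∀ x ∈ L2, inR 4 4 x) ∧ ∀ x ∈ L1, x ∉ L2) →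
        (L1, L2) ∈ doublePaths := by decide
    exact hall L1 hmem1 L2 hmem2 j hj4 ⟨hj1, hl1, hl2, hR1, hR2, fun x h1 h2 => hdisj x ⟨h1, h2⟩⟩
  · intro h
    have hall : ∀ P ∈ doublePaths, ∃ j < 4, 1 ≤ j ∧ P.1 ≠ [] ∧ P.2 ≠ [] ∧
        P.1.IsChain RootStep ∧ P.2.IsChain RootStep ∧
        (∀ x ∈ P.1, inR 4 4 x) ∧ (∀ x ∈ P.2, inR 4 4 x) ∧
        P.1.head? = some (1, 4) ∧ P.2.head? = some (2, 4) ∧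
        P.1.getLast? = some (j, 2 * 4 - j) ∧ P.2.getLast? = some (j + 1, 2 * 4 - j - 1) ∧
        ∀ x ∈ P.1, x ∉ P.2 := by decide
    obtain ⟨j, hj4, hj1, hn1, hn2, hc1, hc2, hR1, hR2, hh1, hh2, hl1, hl2, hdisj⟩ := hall _ h
    exact ⟨j, hj1, hj4, hn1, hn2, hc1, hc2, hR1, hR2, hh1, hh2, hl1, hl2,
      fun x hx => hdisj x hx.1 hx.2⟩

lemma mem_SD_iff (m : ℕ) (s : ℕ × ℕ → ℕ) :
    s ∈ SD 4 4 m ↔ (∀ β, ¬ inR 4 4 β → s β = 0) ∧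
      ∀ P ∈ doublePaths, ((P.1 ++ P.2).map s).sum ≤ m := by
  simp [SD, not_isType1, isType2_iff, cB]

/-- A function can be cut down below itself to any smaller total over a finite set. -/
lemma exists_le_sum_eq {ι : Type*} [DecidableEq ι] (S : Finset ι) (s : ι → ℕ) (k : ℕ)
    (hk : k ≤ ∑ i ∈ S, s i) : ∃ t ≤ s, ∑ i ∈ S, t i = k := by
  induction k with
  | zero => exact ⟨0, fun _ => Nat.zero_le _, by simp⟩
  | succ k ih =>
    obtain ⟨t, hts, htk⟩ := ih (by omega)
    obtain ⟨i, hi, hlt⟩ := Finset.exists_lt_of_sum_lt (show ∑ i ∈ S, t i < ∑ i ∈ S, s i by omega)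
    refine ⟨t + Pi.single i 1, fun j => ?_, by simp [Finset.sum_add_distrib, htk, hi]⟩
    by_cases hj : j = i
    · subst hj; simpa using hlt
    · simpa [hj] using hts j

/-- Splitting off two units from the three middle double paths. -/
lemma exists_split_middle (m : ℕ) (hm : 2 ≤ m) (s : ℕ × ℕ → ℕ)
    (hs : ∀ P ∈ doublePaths, ((P.1 ++ P.2).map s).sum ≤ m) :
    ∃ t ≤ s, ∀ P ∈ doublePaths.tail.dropLast, ((P.1 ++ P.2).map t).sum ≤ 2 ∧
      ((P.1 ++ P.2).map s).sum ≤ ((P.1 ++ P.2).map t).sum + (m - 2) := by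
  simp only [doublePaths, List.tail_cons, List.dropLast, List.forall_mem_cons, List.map_append,
    List.map_cons, List.map_nil, List.sum_append, List.sum_cons, List.sum_nil] at hs ⊢
  by_cases h : 1 ≤ s (1, 6) ∧ 1 ≤ s (2, 5) ∧ 1 ≤ s (3, 4)
  · refine ⟨fun β => if β = (1, 6) ∨ β = (2, 5) ∨ β = (3, 4) then 1 else 0, fun β => ?_, ?_⟩
    · dsimp only
      split_ifs with hβ
      · rcases hβ with rfl | rfl | rfl <;> omega
      · exact Nat.zero_le _
    · simp
      omega
  · let S : Finset (ℕ × ℕ) := {(1, 4), (1, 5), (2, 4), (2, 6), (3, 5), (1, 6), (2, 5), (3, 4)}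
    obtain ⟨t, hts, ht⟩ := exists_le_sum_eq S s (min 2 (∑ i ∈ S, s i)) (min_le_right _ _)
    have hle (p q : ℕ) : t (p, q) ≤ s (p, q) := hts (p, q)
    have := hle 1 4; have := hle 1 5; have := hle 2 4; have := hle 2 6; have := hle 3 5
    have := hle 1 6; have := hle 2 5; have := hle 3 4
    refine ⟨t, hts, ?_⟩
    simp [S] at ht ⊢
    omega

lemma exists_split (m : ℕ) (hm : 2 ≤ m) (s : ℕ × ℕ → ℕ)
    (hs : ∀ P ∈ doublePaths, ((P.1 ++ P.2).map s).sum ≤ m) :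
    ∃ t ≤ s, ∀ P ∈ doublePaths, ((P.1 ++ P.2).map t).sum ≤ 2 ∧
      ((P.1 ++ P.2).map (s - t)).sum ≤ m - 2 := by
  obtain ⟨t, hts, ht⟩ := exists_split_middle m hm s hs
  have hle (p q : ℕ) : t (p, q) ≤ s (p, q) := hts (p, q)
  have := hle 1 4; have := hle 1 5; have := hle 2 4; have := hle 2 6; have := hle 3 5
  have := hle 1 6; have := hle 2 5; have := hle 3 4
  refine ⟨Function.update (Function.update t
    (1, 7) (min (s (1, 7)) (2 - (t (1, 4) + t (1, 5) + t (2, 4) + t (1, 6) + t (2, 5) + t (2, 6)))))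
    (4, 4) (min (s (4, 4)) (2 - (t (1, 4) + t (1, 5) + t (2, 4) + t (2, 5) + t (3, 5) + t (3, 4)))),
    ?_, ?_⟩
  · intro β
    simp only [Function.update_apply]
    split_ifs with h1 h2
    · exact h1 ▸ min_le_left _ _
    · exact h2 ▸ min_le_left _ _
    · exact hts β
  · simp only [doublePaths, List.tail_cons, List.dropLast, List.forall_mem_cons, List.map_append,
      List.map_cons, List.map_nil, List.sum_append, List.sum_cons, List.sum_nil] at hs ht ⊢
    simp at hs ht ⊢
    omega

/-- for `n = 4`, `i = 4`,
`S(D, m·ω₄) = S(D, (m-2)·ω₄) + S(D, 2·ω₄)` for every `m ≥ 2`. -/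
theorem SD_omega4_minkowski (m : ℕ) (hm : 2 ≤ m) :
    SD 4 4 m = SD 4 4 (m - 2) + SD 4 4 2 := by
  ext s
  rw [Set.mem_add]
  constructor
  · intro hs
    obtain ⟨hsupp, hs⟩ := (mem_SD_iff m s).1 hs
    obtain ⟨t, hts, ht⟩ := exists_split m hm s hs
    refine ⟨s - t, (mem_SD_iff _ _).2 ⟨fun β hβ => ?_, fun P hP => (ht P hP).2⟩,
      t, (mem_SD_iff _ _).2 ⟨fun β hβ => ?_, fun P hP => (ht P hP).1⟩, tsub_add_cancel_of_le hts⟩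
    · simp [hsupp β hβ]
    · exact Nat.le_zero.1 (hsupp β hβ ▸ hts β)
  · rintro ⟨u, hu, t, ht, rfl⟩
    obtain ⟨husupp, hu⟩ := (mem_SD_iff _ _).1 hu
    obtain ⟨htsupp, ht⟩ := (mem_SD_iff _ _).1 ht
    refine (mem_SD_iff _ _).2 ⟨fun β hβ => by simp [husupp β hβ, htsupp β hβ], fun P hP => ?_⟩
    have hadd : ((P.1 ++ P.2).map (u + t)).sum =
        ((P.1 ++ P.2).map u).sum + ((P.1 ++ P.2).map t).sum := List.sum_map_add
    have := hu P hP
    have := ht P hP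
    omega
end
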